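/- Every 4-edge-connected graph that has at most five edge-cuts of size 4 and no edge-cuts of size 5 is Z_3-connected. -/

import Mathlib

open Finset

/-- A finite multigraph without loops: each edge `e` has two distinct
endpoints `fst e` and `snd e`.  An orientation is a map `D : E → Bool`,
where `D e = true` means `e` is directed from `fst e` to `snd e`. -/
structure Multigraph (V : Type) (E : Type) where
  fst : E → V
  snd : E → V
  no_loop : ∀ e, fst e ≠ snd e

namespace Multigraph

variable {V E : Type} [Fintype V] [DecidableEq V] [Fintype E] [DecidableEq E]

/-- The tail (initial vertex) of edge `e` under orientation `D`. -/
def tail (G : Multigraph V E) (D : E → Bool) (e : E) : V :=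
  if D e then G.fst e else G.snd e

/-- The head (terminal vertex) of edge `e` under orientation `D`. -/
def head (G : Multigraph V E) (D : E → Bool) (e : E) : V :=
  if D e then G.snd e else G.fst e

/-- Outdegree `d⁺_D(v)` (as an integer, for convenience). -/
def outDeg (G : Multigraph V E) (D : E → Bool) (v : V) : ℤ :=
  ((univ.filter fun e => G.tail D e = v).card : ℤ)

/-- Indegree `d⁻_D(v)`. -/
def inDeg (G : Multigraph V E) (D : E → Bool) (v : V) : ℤ :=
  ((univ.filter fun e => G.head D e = v).card : ℤ)

/-- `e` is incident with `v`. -/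
def Incident (G : Multigraph V E) (v : V) (e : E) : Prop :=
  G.fst e = v ∨ G.snd e = v

instance (G : Multigraph V E) (v : V) : DecidablePred (G.Incident v) := fun e =>
  inferInstanceAs (Decidable (G.fst e = v ∨ G.snd e = v))

/-- The degree of a vertex. -/
def degree (G : Multigraph V E) (v : V) : ℕ :=
  (univ.filter fun e => G.Incident v e).card

/-- The edge-cut `∂_G(A)`: edges with exactly one endpoint in `A`. -/
def cut (G : Multigraph V E) (A : Finset V) : Finset E :=
  univ.filter fun e => ¬ ((G.fst e ∈ A) ↔ (G.snd e ∈ A))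

/-- `G` is `k`-edge-connected: every edge-cut has at least `k` edges. -/
def EdgeConnected (G : Multigraph V E) (k : ℕ) : Prop :=
  ∀ A : Finset V, A.Nonempty → A ≠ univ → k ≤ (G.cut A).card

/-- A boundary function: values in `ℤ₃` summing to `0`. -/
def IsBoundary (β : V → ZMod 3) : Prop := ∑ v, β v = 0

/-- `D` is a `β`-orientation: `d⁺(v) - d⁻(v) ≡ β v (mod 3)` at every vertex. -/
def IsBetaOrientation (G : Multigraph V E) (β : V → ZMod 3) (D : E → Bool) : Prop :=
  ∀ v : V, ((G.outDeg D v - G.inDeg D v : ℤ) : ZMod 3) = β v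

/-- A mod 3-orientation: `d⁺(v) ≡ d⁻(v) (mod 3)` at every vertex. -/
def IsMod3Orientation (G : Multigraph V E) (D : E → Bool) : Prop :=
  ∀ v : V, ((G.outDeg D v - G.inDeg D v : ℤ) : ZMod 3) = 0

/-- `G` admits a mod 3-orientation (equivalently, a nowhere-zero 3-flow). -/
def Mod3Orientable (G : Multigraph V E) : Prop := ∃ D, G.IsMod3Orientation D

/-- `G` is `ℤ₃`-connected. -/
def Z3Connected (G : Multigraph V E) : Prop :=
  ∀ β : V → ZMod 3, IsBoundary β → ∃ D, G.IsBetaOrientation β D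

/-- `G` is `ℤ₃`-extendable at `x`: every pre-orientation of the edges at `x`
compatible with `β x` extends to a `β`-orientation of `G`. -/
def Z3ExtendableAt (G : Multigraph V E) (x : V) : Prop :=
  ∀ β : V → ZMod 3, IsBoundary β →
    ∀ D₀ : E → Bool, ((G.outDeg D₀ x - G.inDeg D₀ x : ℤ) : ZMod 3) = β x →
      ∃ D : E → Bool, (∀ e, G.Incident x e → D e = D₀ e) ∧ G.IsBetaOrientation β D

/-- `G` is mod-3-extendable at `x`: every pre-orientation of `∂(x)` with
`d⁺(x) ≡ d⁻(x) (mod 3)` extends to a mod 3-orientation of `G`. -/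
def Mod3ExtendableAt (G : Multigraph V E) (x : V) : Prop :=
  ∀ D₀ : E → Bool, ((G.outDeg D₀ x - G.inDeg D₀ x : ℤ) : ZMod 3) = 0 →
    ∃ D : E → Bool, (∀ e, G.Incident x e → D e = D₀ e) ∧ G.IsMod3Orientation D

/-- `A` is a `k`-critical-set: `d(A) ≤ k` but every nonempty proper subset has
larger boundary. -/
def CriticalSet (G : Multigraph V E) (k : ℕ) (A : Finset V) : Prop :=
  A.Nonempty ∧ A ≠ univ ∧ (G.cut A).card ≤ k ∧
    ∀ B : Finset V, B.Nonempty → B ⊂ A → k < (G.cut B).card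

/-- The set of edge-cuts of size exactly `k` (as sets of edges). -/
def kCuts (G : Multigraph V E) (k : ℕ) : Finset (Finset E) :=
  ((univ : Finset (Finset V)).filter
    fun A => A.Nonempty ∧ A ≠ univ ∧ (G.cut A).card = k).image G.cut


end Multigraph

open Finset
namespace LT
variable {V : Type} [DecidableEq V]

/-- Distance to the nearest multiple of six. -/
def a6 (x : ℤ) : ℤ := min (x % 6) ((-x) % 6)

/-- Weight of the cut of `A` inside `S`. -/
def cw (S : Finset V) (μ : V → V → ℤ) (A : Finset V) : ℤ := ∑ i ∈ A, ∑ j ∈ S \ A, μ i j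

/-- A single (symmetric) edge. -/
def ed (x y : V) : V → V → ℤ := fun i j =>
  (if i = x ∧ j = y then 1 else 0) + (if i = y ∧ j = x then 1 else 0)

/-- A single directed edge, as an antisymmetric function. -/
def ar (x y : V) : V → V → ℤ := fun i j =>
  (if i = x ∧ j = y then 1 else 0) - (if i = y ∧ j = x then 1 else 0)

/-- Indicator of a vertex. -/
def dl (x : V) : V → ℤ := fun i => if i = x then 1 else 0

/-- Existence of an orientation (as an antisymmetric function) with demand `r` modulo six. -/
def Sol (S : Finset V) (μ : V → V → ℤ) (r : V → ℤ) : Prop :=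
  ∃ f : V → V → ℤ, (∀ i j, f j i = - f i j) ∧
    (∀ i ∈ S, ∀ j ∈ S, i ≠ j → |f i j| ≤ μ i j ∧ (2:ℤ) ∣ f i j - μ i j) ∧
    ∀ i ∈ S, (6:ℤ) ∣ (∑ j ∈ S, f i j) - r i

structure Basic (S : Finset V) (μ : V → V → ℤ) (c q r : V → ℤ) : Prop where
  sym : ∀ i j, μ i j = μ j i
  nn : ∀ i j, 0 ≤ μ i j
  qc : ∀ i ∈ S, |q i| ≤ c i
  qp : ∀ i ∈ S, (2:ℤ) ∣ q i - c i
  par : ∀ i ∈ S, (2:ℤ) ∣ r i - cw S μ {i}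
  tot : (6:ℤ) ∣ ∑ i ∈ S, r i
  z : ∑ i ∈ S, c i ≤ 4 + a6 (∑ i ∈ S, q i)

structure Good (S : Finset V) (μ : V → V → ℤ) (c q r : V → ℤ) : Prop extends Basic S μ c q r where
  cut : ∀ A ⊆ S, A.Nonempty → A ≠ S →
    4 + a6 (∑ i ∈ A, (r i + q i)) ≤ cw S μ A + ∑ i ∈ A, c i

lemma cw_add (S : Finset V) (μ ν : V → V → ℤ) (A : Finset V) :
    cw S (fun i j => μ i j + ν i j) A = cw S μ A + cw S ν A := by
  simp [cw, sum_add_distrib]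

lemma cw_sub (S : Finset V) (μ ν : V → V → ℤ) (A : Finset V) :
    cw S (fun i j => μ i j - ν i j) A = cw S μ A - cw S ν A := by
  simp [cw, sum_sub_distrib]

lemma sum_dl (A : Finset V) (x : V) : ∑ i ∈ A, dl x i = if x ∈ A then 1 else 0 := by
  simp [dl]

lemma cw_ed (S A : Finset V) (x y : V) (hx : x ∈ S) (hy : y ∈ S) :
    cw S (ed x y) A = (if x ∈ A ∧ y ∉ A then 1 else 0) + (if y ∈ A ∧ x ∉ A then 1 else 0) := by
  have key : ∀ u w : V, w ∈ S → (∑ i ∈ A, ∑ j ∈ S \ A, (if i = u ∧ j = w then (1:ℤ) else 0))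
      = if u ∈ A ∧ w ∉ A then 1 else 0 := by
    intro u w hw
    have : ∀ i j, (if i = u ∧ j = w then (1:ℤ) else 0) = if i = u then (if j = w then 1 else 0) else 0 := by
      intro i j; split_ifs <;> simp_all
    simp only [this]
    by_cases h1 : u ∈ A <;> by_cases h2 : w ∈ A <;> simp [h1, h2, hw, Finset.sum_ite_irrel, Finset.sum_ite_eq']
  unfold cw ed
  simp only [sum_add_distrib]
  rw [key x y hy, key y x hx]

lemma cw_insert {S : Finset V} {μ : V → V → ℤ} (sym : ∀ i j, μ i j = μ j i) {A : Finset V} {v : V}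
    (hA : A ⊆ S) (hv : v ∈ S) (hvA : v ∉ A) :
    cw S μ (insert v A) = cw S μ A + cw S μ {v} - 2 * ∑ j ∈ A, μ v j := by
  have e1 : S \ A = insert v (S \ insert v A) := by
    ext x; simp only [mem_sdiff, mem_insert]; by_cases h : x = v <;> simp_all
  have e2 : S \ {v} = A ∪ (S \ insert v A) := by
    ext x; simp only [mem_sdiff, mem_insert, mem_union, mem_singleton]
    by_cases h : x = v
    · simp_all
    · by_cases h2 : x ∈ A
      · simp [h, h2, hA h2]
      · simp [h, h2]
  have d2 : Disjoint A (S \ insert v A) := by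
    rw [disjoint_left]; intro x hx; simp [hx]
  unfold cw
  rw [sum_insert hvA]
  simp only [sum_singleton]
  rw [e2, sum_union d2, e1]
  have : ∀ i, ∑ j ∈ insert v (S \ insert v A), μ i j = μ i v + ∑ j ∈ S \ insert v A, μ i j := by
    intro i; rw [sum_insert]; simp
  simp only [this, sum_add_distrib]
  have : ∑ i ∈ A, μ i v = ∑ j ∈ A, μ v j := sum_congr rfl (fun i _ => sym i v)
  rw [this]; ring

lemma cw_compl {S : Finset V} {μ : V → V → ℤ} (sym : ∀ i j, μ i j = μ j i) {A : Finset V}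
    (hA : A ⊆ S) : cw S μ (S \ A) = cw S μ A := by
  unfold cw
  rw [Finset.sdiff_sdiff_eq_self hA, sum_comm]
  exact sum_congr rfl fun i _ => sum_congr rfl fun j _ => sym _ _

lemma cw_sub_set {S S' B : Finset V} {μ : V → V → ℤ} (hS : S' ⊆ S) (hB : B ⊆ S') :
    cw S μ B = cw S' μ B + ∑ i ∈ B, ∑ j ∈ S \ S', μ i j := by
  unfold cw
  rw [← sum_add_distrib]
  refine sum_congr rfl fun i _ => ?_
  have : S \ B = (S' \ B) ∪ (S \ S') := by
    ext x; simp only [mem_sdiff, mem_union]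
    constructor
    · rintro ⟨h1, h2⟩; by_cases h : x ∈ S' <;> simp_all
    · rintro (⟨h1, h2⟩ | ⟨h1, h2⟩)
      · exact ⟨hS h1, h2⟩
      · exact ⟨h1, fun h => h2 (hB h)⟩
  rw [this, sum_union]
  rw [disjoint_left]; intro x hx; simp only [mem_sdiff] at *; tauto

lemma cw_nonneg {S : Finset V} {μ : V → V → ℤ} (nn : ∀ i j, 0 ≤ μ i j) (A : Finset V) : 0 ≤ cw S μ A :=
  sum_nonneg fun _ _ => sum_nonneg fun _ _ => nn _ _

lemma Basic.parD {S : Finset V} {μ : V → V → ℤ} {c q r : V → ℤ} (H : Basic S μ c q r) :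
    ∀ A ⊆ S, (2:ℤ) ∣ (cw S μ A + ∑ i ∈ A, c i) - ∑ i ∈ A, (r i + q i) := by
  intro A
  induction A using Finset.induction_on with
  | empty => intro _; simp [cw]
  | insert v A hv ih =>
    intro h
    have hA : A ⊆ S := (subset_insert _ _).trans h
    have hvS : v ∈ S := h (mem_insert_self _ _)
    have := ih hA
    rw [cw_insert H.sym hA hvS hv, sum_insert hv, sum_insert hv]
    have h1 := H.par v hvS
    have h2 := H.qp v hvS
    omega

lemma ar_anti (x y i j : V) : ar x y j i = - ar x y i j := by
  unfold ar; simp only [and_comm (a := j = x), and_comm (a := j = y)]; ring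

lemma sum_ar (S : Finset V) {x y : V} (hx : x ∈ S) (hy : y ∈ S) (i : V) :
    ∑ j ∈ S, ar x y i j = dl x i - dl y i := by
  have key : ∀ u w : V, w ∈ S → (∑ j ∈ S, (if i = u ∧ j = w then (1:ℤ) else 0)) = if i = u then 1 else 0 := by
    intro u w hw
    by_cases h : i = u <;> simp [h, hw]
  unfold ar dl
  rw [sum_sub_distrib, key x y hy, key y x hx]

lemma sol_del {S : Finset V} {μ : V → V → ℤ} {r : V → ℤ} {u w : V}
    (hu : u ∈ S) (hw : w ∈ S) (huw : u ≠ w)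
    (h : Sol S (fun i j => μ i j - ed u w i j) (fun i => r i - dl u i + dl w i)) : Sol S μ r := by
  obtain ⟨f, fa, fb, fn⟩ := h
  refine ⟨fun i j => f i j + ar u w i j, ?_, ?_, ?_⟩
  · intro i j; simp only; rw [fa i j, ar_anti u w i j]; ring
  · intro i hi j hj hij
    have := fb i hi j hj hij
    simp only [abs_le] at *
    unfold ed at this; unfold ar
    split_ifs at * <;> omega
  · intro i hi
    have := fn i hi
    simp only [sum_add_distrib]
    rw [sum_ar S hu hw]
    simp only at this
    omega

/-- lifting of a pair, at the level of a flow, keeping track of what happens -/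
lemma lift_flow {S : Finset V} {μ : V → V → ℤ} {x y v : V} {f : V → V → ℤ} (sym : ∀ i j, μ i j = μ j i)
    (nn : ∀ i j, 0 ≤ μ i j) (hx : x ∈ S) (hy : y ∈ S) (hv : v ∈ S)
    (hxv : x ≠ v) (hyv : y ≠ v) (fa : ∀ i j, f j i = - f i j) (P : V → V → Prop)
    (fb : ∀ i ∈ S, ∀ j ∈ S, i ≠ j → P i j → |f i j| ≤ μ i j - ed x v i j - ed y v i j + ed x y i j ∧
      (2:ℤ) ∣ f i j - (μ i j - ed x v i j - ed y v i j + ed x y i j)) (hP : P x y) :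
    ∃ s : ℤ, (s = 1 ∨ s = -1) ∧
     (∀ i ∈ S, ∀ j ∈ S, i ≠ j → P i j → |f i j + s * (ar x v i j + ar v y i j + ar y x i j)| ≤ μ i j ∧
      (2:ℤ) ∣ (f i j + s * (ar x v i j + ar v y i j + ar y x i j)) - μ i j) := by
  have : ∃ s : ℤ, (s = 1 ∨ s = -1) ∧ (x ≠ y → |f x y - s| ≤ μ x y) := by
    by_cases hxy : x = y
    · exact ⟨1, Or.inl rfl, fun h => absurd hxy h⟩
    · have := fb x hx y hy hxy hP
      have h0 := nn x y
      simp only [ed, abs_le] at this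
      simp [hxy, hxv, hyv, Ne.symm hxy] at this
      by_cases h1 : 0 < f x y
      · refine ⟨1, Or.inl rfl, fun _ => ?_⟩; rw [abs_le]; omega
      · refine ⟨-1, Or.inr rfl, fun _ => ?_⟩; rw [abs_le]; omega
  obtain ⟨s, hs, hs2⟩ := this
  refine ⟨s, hs, ?_⟩
  intro i hi j hj hij hp
  have h1 := fb i hi j hj hij hp
  have h2 := fa i j
  have h0 := nn i j
  by_cases hxy : x = y
  · subst hxy
    unfold ed at h1; unfold ar
    simp only [abs_le] at *
    rcases hs with rfl | rfl <;> (split_ifs at * <;> first | omega | (exfalso; simp_all))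
  · have h3 := hs2 hxy
    have h4 := fa x y
    by_cases e1 : i = x ∧ j = y
    · obtain ⟨rfl, rfl⟩ := e1
      simp only [ed, ar, abs_le] at *
      simp [hxy, hxv, hyv, Ne.symm hxy, Ne.symm hxv, Ne.symm hyv] at h1 h3 ⊢
      rcases hs with rfl | rfl <;> omega
    by_cases e2 : i = y ∧ j = x
    · obtain ⟨rfl, rfl⟩ := e2
      have hsy := sym i j
      clear sym nn fb fa
      simp only [ed, ar, abs_le] at *
      simp [hxy, hxv, hyv, Ne.symm hxy, Ne.symm hxv, Ne.symm hyv] at h1 h3 ⊢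
      rcases hs with rfl | rfl <;> omega
    clear h2 h4 h3 hs2 fa fb
    unfold ed at h1; unfold ar
    simp only [abs_le, e1, e2, if_false] at *
    have g1 : i = x ∧ j = v → ¬ (i = v ∧ j = x) := by rintro ⟨rfl, rfl⟩ ⟨h, _⟩; exact hxv h
    have g2 : i = y ∧ j = v → ¬ (i = v ∧ j = y) := by rintro ⟨rfl, rfl⟩ ⟨h, _⟩; exact hyv h
    have g3 : i = x ∧ j = v → ¬ (i = v ∧ j = y) := by rintro ⟨rfl, rfl⟩ ⟨h, _⟩; exact hxv h
    have g4 : i = y ∧ j = v → ¬ (i = v ∧ j = x) := by rintro ⟨rfl, rfl⟩ ⟨h, _⟩; exact hyv h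
    have g5 : i = x ∧ j = v → ¬ (i = y ∧ j = v) := by rintro ⟨rfl, rfl⟩ ⟨h, _⟩; exact hxy h
    have g6 : i = v ∧ j = x → ¬ (i = v ∧ j = y) := by rintro ⟨rfl, rfl⟩ ⟨_, h⟩; exact hxy h
    rcases hs with rfl | rfl <;> (split_ifs at * <;> first | omega | tauto)

/-- Splitting an integer among several bounded integers with prescribed parities. -/
lemma distr (A : Finset V) (m : V → ℤ) (hm : ∀ i, 0 ≤ m i) :
    ∀ F : ℤ, |F| ≤ ∑ i ∈ A, m i → (2:ℤ) ∣ F - ∑ i ∈ A, m i →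
    ∃ g : V → ℤ, (∀ i, |g i| ≤ m i ∧ (2:ℤ) ∣ g i - m i) ∧ ∑ i ∈ A, g i = F := by
  induction A using Finset.induction_on with
  | empty =>
    intro F h1 h2
    refine ⟨m, fun i => ⟨by rw [abs_of_nonneg (hm i)], by simp⟩, ?_⟩
    simp only [sum_empty, abs_nonpos_iff] at *
    exact h1.symm
  | insert v A hv ih =>
    intro F h1 h2
    rw [sum_insert hv] at h1 h2
    have hs : 0 ≤ ∑ i ∈ A, m i := sum_nonneg fun i _ => hm i
    have hv0 := hm v
    have : ∃ t : ℤ, |t| ≤ m v ∧ (2:ℤ) ∣ t - m v ∧ |F - t| ≤ ∑ i ∈ A, m i := by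
      by_cases h' : - m v ≤ F - ∑ i ∈ A, m i
      · refine ⟨F - ∑ i ∈ A, m i, ?_, ?_, ?_⟩
        · rw [abs_le] at *; omega
        · omega
        · rw [abs_le] at *; omega
      · refine ⟨- m v, ?_, by omega, ?_⟩ <;> (rw [abs_le] at *; omega)
    obtain ⟨t, t1, t2, t3⟩ := this
    obtain ⟨g, g1, g2⟩ := ih (F - t) t3 (by omega)
    refine ⟨fun i => if i = v then t else g i, ?_, ?_⟩
    · intro i
      by_cases h : i = v
      · subst h; simp only [if_true]; exact ⟨t1, t2⟩
      · simp only [h, if_false]; exact g1 i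
    · rw [sum_insert hv, if_pos rfl]
      rw [sum_congr rfl (g := g)]
      · rw [g2]; ring
      · intro i hi; rw [if_neg]; rintro rfl; exact hv hi

lemma anti_sum_zero (A : Finset V) (f : V → V → ℤ) (fa : ∀ i j, f j i = - f i j) :
    ∑ i ∈ A, ∑ j ∈ A, f i j = 0 := by
  have h : ∑ i ∈ A, ∑ j ∈ A, f i j = ∑ i ∈ A, ∑ j ∈ A, - f i j := by
    rw [sum_comm]
    exact sum_congr rfl fun i _ => sum_congr rfl fun j _ => fa _ _
  simp only [sum_neg_distrib] at h
  omega

lemma sol_restrict {S S' : Finset V} {μ : V → V → ℤ} {r : V → ℤ} (hS : S' ⊆ S) (f0 : V → V → ℤ)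
    (fa : ∀ i j, f0 j i = - f0 i j)
    (fb : ∀ i ∈ S, ∀ j ∈ S, i ≠ j → ¬ (i ∈ S' ∧ j ∈ S') → |f0 i j| ≤ μ i j ∧ (2:ℤ) ∣ f0 i j - μ i j)
    (fn : ∀ i ∈ S \ S', (6:ℤ) ∣ (∑ j ∈ S, f0 i j) - r i)
    (h : Sol S' μ (fun i => r i - ∑ j ∈ S \ S', f0 i j)) : Sol S μ r := by
  obtain ⟨f, ga, gb, gn⟩ := h
  refine ⟨fun i j => if i ∈ S' ∧ j ∈ S' then f i j else f0 i j, ?_, ?_, ?_⟩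
  · intro i j
    by_cases h1 : i ∈ S' <;> by_cases h2 : j ∈ S' <;> simp only [h1, h2] <;> simp [ga i j, fa i j]
  · intro i hi j hj hij
    by_cases h : i ∈ S' ∧ j ∈ S'
    · simp only [h]; exact gb i h.1 j h.2 hij
    · simp only [h]; exact fb i hi j hj hij h
  · intro i hi
    by_cases h : i ∈ S'
    · have := gn i h
      rw [← sum_sdiff hS]
      have e1 : ∑ j ∈ S', (if i ∈ S' ∧ j ∈ S' then f i j else f0 i j) = ∑ j ∈ S', f i j :=
        sum_congr rfl fun j hj => by simp [h, hj]
      have e2 : ∑ j ∈ S \ S', (if i ∈ S' ∧ j ∈ S' then f i j else f0 i j) = ∑ j ∈ S \ S', f0 i j :=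
        sum_congr rfl fun j hj => by simp [(mem_sdiff.1 hj).2]
      rw [e1, e2]
      simp only at this
      omega
    · simp only [h, false_and, if_false]
      exact fn i (mem_sdiff.2 ⟨hi, h⟩)

lemma tot_in {S S' : Finset V} {r : V → ℤ} (hS : S' ⊆ S) (f0 : V → V → ℤ)
    (fa : ∀ i j, f0 j i = - f0 i j)
    (fn : ∀ i ∈ S \ S', (6:ℤ) ∣ (∑ j ∈ S, f0 i j) - r i) (ht : (6:ℤ) ∣ ∑ i ∈ S, r i) :
    (6:ℤ) ∣ ∑ i ∈ S', (r i - ∑ j ∈ S \ S', f0 i j) := by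
  have h1 := dvd_sum fn
  rw [sum_sub_distrib] at h1
  have e : ∑ i ∈ S \ S', ∑ j ∈ S, f0 i j = ∑ i ∈ S \ S', ∑ j ∈ S', f0 i j := by
    have : ∀ i, ∑ j ∈ S, f0 i j = ∑ j ∈ S \ S', f0 i j + ∑ j ∈ S', f0 i j := fun i => (sum_sdiff hS).symm
    simp only [this, sum_add_distrib]
    rw [anti_sum_zero _ _ fa, zero_add]
  rw [e, sum_comm] at h1
  have e2 : ∑ i ∈ S', ∑ j ∈ S \ S', f0 i j = - ∑ i ∈ S', ∑ j ∈ S \ S', f0 j i := by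
    rw [← sum_neg_distrib]
    refine sum_congr rfl fun i _ => ?_
    rw [← sum_neg_distrib]
    exact sum_congr rfl fun j _ => fa _ _
  rw [← sum_sdiff hS] at ht
  rw [sum_sub_distrib, e2]
  omega

lemma inner {S S' : Finset V} {μ : V → V → ℤ} {c q r : V → ℤ} (H : Basic S μ c q r)
    (ih : ∀ (S' : Finset V) (μ' : V → V → ℤ) (c' q' r' : V → ℤ), S'.card < S.card →
      Good S' μ' c' q' r' → Sol S' μ' r')
    (hS : S' ⊆ S) (hne : S' ≠ S) (f0 : V → V → ℤ)
    (fa : ∀ i j, f0 j i = - f0 i j)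
    (fb : ∀ i ∈ S, ∀ j ∈ S, i ≠ j → ¬ (i ∈ S' ∧ j ∈ S') → |f0 i j| ≤ μ i j ∧ (2:ℤ) ∣ f0 i j - μ i j)
    (fn : ∀ i ∈ S \ S', (6:ℤ) ∣ (∑ j ∈ S, f0 i j) - r i)
    (c' q' : V → ℤ) (qc : ∀ i ∈ S', |q' i| ≤ c' i) (qp : ∀ i ∈ S', (2:ℤ) ∣ q' i - c' i)
    (hz : ∑ i ∈ S', c' i ≤ 4 + a6 (∑ i ∈ S', q' i))
    (hcut : ∀ A ⊆ S', A.Nonempty → A ≠ S' →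
      4 + a6 (∑ i ∈ A, (r i - ∑ j ∈ S \ S', f0 i j + q' i)) ≤ cw S' μ A + ∑ i ∈ A, c' i) :
    Sol S μ r := by
  refine sol_restrict hS f0 fa fb fn (ih S' μ c' q' _ ?_ ?_)
  · exact card_lt_card (lt_of_le_of_ne hS hne)
  · refine ⟨⟨H.sym, H.nn, qc, qp, ?_, tot_in hS f0 fa fn H.tot, hz⟩, hcut⟩
    intro i hi
    have h1 := H.par i (hS hi)
    rw [cw_sub_set hS (singleton_subset_iff.2 hi), sum_singleton] at h1
    have h2 : (2:ℤ) ∣ ∑ j ∈ S \ S', (f0 i j - μ i j) := by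
      refine dvd_sum fun j hj => ?_
      have hj' := mem_sdiff.1 hj
      refine (fb i (hS hi) j hj'.1 ?_ ?_).2
      · rintro rfl; exact hj'.2 hi
      · tauto
    rw [sum_sub_distrib] at h2
    omega
end LT

open Finset
namespace LT
variable {V : Type} [DecidableEq V]

/-- Fibre of the contraction of `A` to `a`. -/
def Fb (A : Finset V) (a i : V) : Finset V := if i = a then A else {i}

lemma outer {S : Finset V} {μ : V → V → ℤ} {c q r : V → ℤ} (H : Basic S μ c q r)
    (ih : ∀ (S' : Finset V) (μ' : V → V → ℤ) (c' q' r' : V → ℤ), S'.card < S.card →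
      Good S' μ' c' q' r' → Sol S' μ' r')
    {A : Finset V} (hA : A ⊆ S) (hA2 : 2 ≤ A.card)
    (hcut : ∀ B ⊆ S, B.Nonempty → B ≠ S → (A ⊆ B ∨ Disjoint A B) →
      4 + a6 (∑ i ∈ B, (r i + q i)) ≤ cw S μ B + ∑ i ∈ B, c i) :
    ∃ f0 : V → V → ℤ, (∀ i j, f0 j i = - f0 i j) ∧
      (∀ i ∈ S, ∀ j ∈ S, i ≠ j → ¬ (i ∈ A ∧ j ∈ A) → |f0 i j| ≤ μ i j ∧ (2:ℤ) ∣ f0 i j - μ i j) ∧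
      (∀ i ∈ S \ A, (6:ℤ) ∣ (∑ j ∈ S, f0 i j) - r i) := by
  obtain ⟨a, ha⟩ : A.Nonempty := card_pos.1 (by omega)
  set F := Fb A a with hF
  set S1 := insert a (S \ A) with hS1
  have haS := hA ha
  have Fa : F a = A := by simp [hF, Fb]
  have Fi : ∀ i, i ≠ a → F i = {i} := by intro i hi; simp [hF, Fb, hi]
  have mS1 : ∀ i ∈ S1, i ≠ a → i ∈ S ∧ i ∉ A := by
    intro i hi hia; simp [hS1, hia] at hi; exact hi
  have aS1 : a ∈ S1 := mem_insert_self _ _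
  have FS : ∀ i ∈ S1, F i ⊆ S := by
    intro i hi
    by_cases h : i = a
    · subst h; rw [Fa]; exact hA
    · rw [Fi i h]; exact singleton_subset_iff.2 (mS1 i hi h).1
  have self : ∀ i ∈ S1, i ∈ F i := by
    intro i hi
    by_cases h : i = a
    · subst h; rw [Fa]; exact ha
    · rw [Fi i h]; simp
  have Fdis : ∀ i ∈ S1, ∀ j ∈ S1, i ≠ j → Disjoint (F i) (F j) := by
    intro i hi j hj hij
    by_cases h : i = a
    · subst h; rw [Fa, Fi j (Ne.symm hij), disjoint_singleton_right]; exact (mS1 j hj (Ne.symm hij)).2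
    · rw [Fi i h, disjoint_singleton_left]
      by_cases h' : j = a
      · subst h'; rw [Fa]; exact (mS1 i hi h).2
      · rw [Fi j h']; simpa using hij
  have FU : S1.biUnion F = S := by
    ext x; simp only [mem_biUnion]
    constructor
    · rintro ⟨i, hi, hx⟩; exact FS i hi hx
    · intro hx
      by_cases h : x ∈ A
      · exact ⟨a, aS1, by rw [Fa]; exact h⟩
      · refine ⟨x, by simp [hS1, h, hx], ?_⟩
        rw [Fi x (by rintro rfl; exact h ha)]; simp
  have sumF : ∀ (B : Finset V) (g : V → ℤ), B ⊆ S1 → ∑ x ∈ B.biUnion F, g x = ∑ i ∈ B, ∑ x ∈ F i, g x := by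
    intro B g hB
    exact sum_biUnion (fun i hi j hj hij => Fdis i (hB hi) j (hB hj) hij)
  have sd : ∀ B ⊆ S1, S \ B.biUnion F = (S1 \ B).biUnion F := by
    intro B hB
    ext x
    simp only [mem_sdiff, mem_biUnion]
    rw [← FU]
    simp only [mem_biUnion]
    constructor
    · rintro ⟨⟨i, hi, hx⟩, h2⟩
      exact ⟨i, ⟨hi, fun h => h2 ⟨i, h, hx⟩⟩, hx⟩
    · rintro ⟨i, ⟨hi, hiB⟩, hx⟩
      refine ⟨⟨i, hi, hx⟩, ?_⟩
      rintro ⟨j, hj, hxj⟩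
      have : i ≠ j := by rintro rfl; exact hiB hj
      exact disjoint_left.1 (Fdis i hi j (hB hj) this) hx hxj
  set μ1 : V → V → ℤ := fun i j => ∑ x ∈ F i, ∑ y ∈ F j, μ x y with hμ1
  have cwF : ∀ B ⊆ S1, cw S1 μ1 B = cw S μ (B.biUnion F) := by
    intro B hB
    unfold cw
    rw [sumF B _ hB, sd B hB]
    refine sum_congr rfl fun i _ => ?_
    simp only [hμ1]
    rw [sum_comm]
    refine sum_congr rfl fun x _ => ?_
    rw [sumF _ _ sdiff_subset]
  set c1 : V → ℤ := fun i => ∑ x ∈ F i, c x with hc1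
  set q1 : V → ℤ := fun i => ∑ x ∈ F i, q x with hq1
  set r1 : V → ℤ := fun i => ∑ x ∈ F i, r x with hr1
  have good : Good S1 μ1 c1 q1 r1 := by
    refine ⟨⟨?_, ?_, ?_, ?_, ?_, ?_, ?_⟩, ?_⟩
    · intro i j; simp only [hμ1]; rw [sum_comm]
      exact sum_congr rfl fun _ _ => sum_congr rfl fun _ _ => H.sym _ _
    · intro i j; exact sum_nonneg fun _ _ => sum_nonneg fun _ _ => H.nn _ _
    · intro i hi
      exact (abs_sum_le_sum_abs _ _).trans (sum_le_sum fun x hx => H.qc x (FS i hi hx))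
    · intro i hi
      simp only [hq1, hc1]; rw [← sum_sub_distrib]
      exact dvd_sum fun x hx => H.qp x (FS i hi hx)
    · intro i hi
      rw [cwF _ (singleton_subset_iff.2 hi), singleton_biUnion]
      have h1 := H.parD (F i) (FS i hi)
      have h2 : (2:ℤ) ∣ ∑ x ∈ F i, (q x - c x) := dvd_sum fun x hx => H.qp x (FS i hi hx)
      rw [sum_add_distrib] at h1
      rw [sum_sub_distrib] at h2
      simp only [hr1]
      omega
    · simp only [hr1]; rw [← sumF _ _ (Subset.refl _), FU]; exact H.tot
    · simp only [hc1, hq1]; rw [← sumF _ _ (Subset.refl _), ← sumF _ _ (Subset.refl _), FU]; exact H.z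
    · intro B hB hne hBS
      have := hcut (B.biUnion F) ?_ ?_ ?_ ?_
      · rw [cwF B hB]
        simp only [hc1, hq1, hr1, ← sum_add_distrib]
        rw [← sumF _ _ hB, ← sumF _ _ hB]; exact this
      · rw [← FU]; exact biUnion_subset_biUnion_of_subset_left _ hB
      · obtain ⟨i, hi⟩ := hne
        exact ⟨i, mem_biUnion.2 ⟨i, hi, self i (hB hi)⟩⟩
      · intro h
        apply hBS
        refine Subset.antisymm hB fun i hi => ?_
        by_contra hiB
        have h3 := sd B hB
        rw [h, sdiff_self] at h3
        have : i ∈ (S1 \ B).biUnion F := mem_biUnion.2 ⟨i, mem_sdiff.2 ⟨hi, hiB⟩, self i hi⟩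
        rw [← h3] at this
        simp at this
      · by_cases haB : a ∈ B
        · left; rw [← Fa]; exact subset_biUnion_of_mem F haB
        · right; rw [disjoint_biUnion_right]
          intro i hi
          have : a ≠ i := by rintro rfl; exact haB hi
          rw [← Fa]; exact Fdis a aS1 i (hB hi) this
  have hcard : S1.card < S.card := by
    have h1 : S1.card ≤ (S \ A).card + 1 := card_insert_le _ _
    have h2 := card_sdiff_add_card_eq_card hA
    omega
  obtain ⟨f1, f1a, f1b, f1n⟩ := ih S1 μ1 c1 q1 r1 hcard good
  have hg : ∀ i, ∃ g : V → ℤ, i ∈ S \ A → (∀ j, |g j| ≤ μ i j ∧ (2:ℤ) ∣ g j - μ i j) ∧ ∑ j ∈ A, g j = f1 i a := by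
    intro i
    by_cases hi : i ∈ S \ A
    · have hia : i ≠ a := by rintro rfl; exact (mem_sdiff.1 hi).2 ha
      have h1 := f1b i (mem_insert_of_mem hi) a aS1 hia
      have h2 : μ1 i a = ∑ j ∈ A, μ i j := by simp [hμ1, Fa, Fi i hia]
      rw [h2] at h1
      obtain ⟨g, g1, g2⟩ := distr A (μ i) (H.nn i) (f1 i a) h1.1 h1.2
      exact ⟨g, fun _ => ⟨g1, g2⟩⟩
    · exact ⟨0, fun h => absurd h hi⟩
  choose g hg using hg
  refine ⟨fun i j => if i ∈ A then (if j ∈ A then 0 else - g j i) else (if j ∈ A then g i j else f1 i j), ?_, ?_, ?_⟩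
  · intro i j
    by_cases h1 : i ∈ A <;> by_cases h2 : j ∈ A <;> simp [h1, h2, f1a i j]
  · intro i hi j hj hij hAA
    by_cases h1 : i ∈ A <;> by_cases h2 : j ∈ A
    · exact absurd ⟨h1, h2⟩ hAA
    · simp only [h1, h2, if_true, if_false]
      have := (hg j (mem_sdiff.2 ⟨hj, h2⟩)).1 i
      rw [H.sym i j, abs_neg]
      exact ⟨this.1, by omega⟩
    · simp only [h1, h2, if_true, if_false]
      exact (hg i (mem_sdiff.2 ⟨hi, h1⟩)).1 j
    · simp only [h1, h2, if_false]
      have hia : i ≠ a := by rintro rfl; exact h1 ha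
      have hja : j ≠ a := by rintro rfl; exact h2 ha
      have := f1b i (mem_insert_of_mem (mem_sdiff.2 ⟨hi, h1⟩)) j (mem_insert_of_mem (mem_sdiff.2 ⟨hj, h2⟩)) hij
      simpa [hμ1, Fi i hia, Fi j hja] using this
  · intro i hi
    have hi' := mem_sdiff.1 hi
    have hia : i ≠ a := by rintro rfl; exact hi'.2 ha
    have := f1n i (mem_insert_of_mem hi)
    rw [hS1, sum_insert (by simp [ha])] at this
    simp only [hr1, Fi i hia, sum_singleton] at this
    rw [← (hg i hi).2] at this
    rw [← sum_sdiff hA]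
    simp only [hi'.2, if_false]
    have e1 : ∑ j ∈ A, (if j ∈ A then g i j else f1 i j) = ∑ j ∈ A, g i j :=
      sum_congr rfl fun j hj => by simp [hj]
    have e2 : ∑ j ∈ S \ A, (if j ∈ A then g i j else f1 i j) = ∑ j ∈ S \ A, f1 i j :=
      sum_congr rfl fun j hj => by simp [(mem_sdiff.1 hj).2]
    rw [e1, e2, add_comm]; exact this

end LT

open Finset
namespace LT
variable {V : Type} [DecidableEq V]

/-- Degree of a set. -/
def D (S : Finset V) (μ : V → V → ℤ) (c : V → ℤ) (A : Finset V) : ℤ := cw S μ A + ∑ i ∈ A, c i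

/-- Demand of a set. -/
def b (q r : V → ℤ) (A : Finset V) : ℤ := ∑ i ∈ A, (r i + q i)

/-- The number used for the induction. -/
def NN (S : Finset V) (μ : V → V → ℤ) (c : V → ℤ) : ℤ := ∑ i ∈ S, ∑ j ∈ S, μ i j + ∑ i ∈ S, c i

/-- A minimal counterexample. -/
structure Ctx (S : Finset V) (μ : V → V → ℤ) (c q r : V → ℤ) : Prop extends Good S μ c q r where
  ih1 : ∀ (S' : Finset V) (μ' : V → V → ℤ) (c' q' r' : V → ℤ), S'.card < S.card →
      Good S' μ' c' q' r' → Sol S' μ' r'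
  ih2 : ∀ (μ' : V → V → ℤ) (c' q' r' : V → ℤ), NN S μ' c' < NN S μ c →
      Good S μ' c' q' r' → Sol S μ' r'
  ns : ¬ Sol S μ r
  c3 : 3 ≤ S.card

lemma a6_congr {x y : ℤ} (h : (6:ℤ) ∣ x - y) : a6 x = a6 y := by
  unfold a6; omega

lemma inner_k {S S' : Finset V} {μ : V → V → ℤ} {c q r : V → ℤ} (H : Basic S μ c q r)
    (ih : ∀ (S' : Finset V) (μ' : V → V → ℤ) (c' q' r' : V → ℤ), S'.card < S.card →
      Good S' μ' c' q' r' → Sol S' μ' r')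
    (hS : S' ⊆ S) (hne : S' ≠ S) (f0 : V → V → ℤ)
    (fa : ∀ i j, f0 j i = - f0 i j)
    (fb : ∀ i ∈ S, ∀ j ∈ S, i ≠ j → ¬ (i ∈ S' ∧ j ∈ S') → |f0 i j| ≤ μ i j ∧ (2:ℤ) ∣ f0 i j - μ i j)
    (fn : ∀ i ∈ S \ S', (6:ℤ) ∣ (∑ j ∈ S, f0 i j) - r i)
    (κ : V → ℤ)
    (hk : ∀ i ∈ S', |q i + ∑ j ∈ S \ S', f0 i j - κ i| ≤ c i + ∑ j ∈ S \ S', μ i j - κ i)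
    (hz : D S μ c S' - ∑ i ∈ S', κ i ≤ 4 + a6 (b q r S' - ∑ i ∈ S', κ i))
    (hcut : ∀ A ⊆ S', A.Nonempty → A ≠ S' →
      4 + a6 (b q r A - ∑ i ∈ A, κ i) ≤ D S μ c A - ∑ i ∈ A, κ i) :
    Sol S μ r := by
  refine inner H ih hS hne f0 fa fb fn (fun i => c i + ∑ j ∈ S \ S', μ i j - κ i)
    (fun i => q i + ∑ j ∈ S \ S', f0 i j - κ i) hk ?_ ?_ ?_
  · intro i hi
    have h2 : (2:ℤ) ∣ ∑ j ∈ S \ S', (f0 i j - μ i j) := by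
      refine dvd_sum fun j hj => ?_
      have hj' := mem_sdiff.1 hj
      refine (fb i (hS hi) j hj'.1 ?_ ?_).2
      · rintro rfl; exact hj'.2 hi
      · tauto
    rw [sum_sub_distrib] at h2
    have := H.qp i (hS hi)
    omega
  · have h1 := tot_in hS f0 fa fn H.tot
    simp only [sum_sub_distrib, sum_add_distrib] at h1 ⊢
    simp only [D, b, cw, sum_add_distrib] at hz
    rw [a6_congr (y := ∑ i ∈ S', r i + ∑ i ∈ S', q i - ∑ i ∈ S', κ i)] <;> omega
  · intro A hA hAn hAS
    have h1 := hcut A hA hAn hAS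
    simp only [D, b, sum_add_distrib] at h1
    rw [cw_sub_set hS hA] at h1
    simp only [sum_sub_distrib, sum_add_distrib] at h1 ⊢
    rw [a6_congr (y := ∑ i ∈ A, r i + ∑ i ∈ A, q i - ∑ i ∈ A, κ i)] <;> omega

/-- bounds that hold when `κ = 0`. -/
lemma std_bound {S S' : Finset V} {μ : V → V → ℤ} {c q r : V → ℤ} (H : Basic S μ c q r)
    (hS : S' ⊆ S) (f0 : V → V → ℤ)
    (fb : ∀ i ∈ S, ∀ j ∈ S, i ≠ j → ¬ (i ∈ S' ∧ j ∈ S') → |f0 i j| ≤ μ i j ∧ (2:ℤ) ∣ f0 i j - μ i j) :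
    ∀ i ∈ S', |q i + ∑ j ∈ S \ S', f0 i j| ≤ c i + ∑ j ∈ S \ S', μ i j := by
  intro i hi
  have h1 := H.qc i (hS hi)
  have h2 : |∑ j ∈ S \ S', f0 i j| ≤ ∑ j ∈ S \ S', μ i j := by
    refine (abs_sum_le_sum_abs _ _).trans (sum_le_sum fun j hj => ?_)
    have hj' := mem_sdiff.1 hj
    refine (fb i (hS hi) j hj'.1 ?_ ?_).1
    · rintro rfl; exact hj'.2 hi
    · tauto
  exact (abs_add_le _ _).trans (add_le_add h1 h2)

lemma Good.cutD {S : Finset V} {μ : V → V → ℤ} {c q r : V → ℤ} (H : Good S μ c q r) {A : Finset V}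
    (hA : A ⊆ S) (hn : A.Nonempty) (hne : A ≠ S) : 4 + a6 (b q r A) ≤ D S μ c A := H.cut A hA hn hne

lemma Ctx.P1 {S : Finset V} {μ : V → V → ℤ} {c q r : V → ℤ} (H : Ctx S μ c q r) {A : Finset V}
    (hA : A ⊆ S) (hne : A ≠ S) (h2 : 2 ≤ A.card) : 6 + a6 (b q r A) ≤ D S μ c A := by
  by_contra hcon
  have hAn : A.Nonempty := card_pos.1 (by omega)
  have h1 := H.cutD hA hAn hne
  have h3 : (2:ℤ) ∣ D S μ c A - b q r A := H.parD A hA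
  have h4 : D S μ c A = 4 + a6 (b q r A) := by unfold a6 at *; omega
  obtain ⟨f0, fa, fb, fn⟩ := outer H.toBasic H.ih1 hA h2 (fun B hB hn hne _ => H.cut B hB hn hne)
  refine H.ns (inner_k H.toBasic H.ih1 hA hne f0 fa fb fn (fun _ => 0) ?_ ?_ ?_)
  · simpa using std_bound H.toBasic hA f0 fb
  · simp only [sum_const_zero, sub_zero]; omega
  · intro B hB hBn hBA
    simp only [sum_const_zero, sub_zero]
    exact H.cutD (hB.trans hA) hBn (fun h => hne (Subset.antisymm hA (h ▸ hB)))

lemma two_le {A : Finset V} {u : V} (hu : u ∈ A) (h : A ≠ {u}) : 2 ≤ A.card := by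
  by_contra hc
  have : A.card = 1 := by have := card_pos.2 ⟨u, hu⟩; omega
  obtain ⟨x, rfl⟩ := card_eq_one.1 this
  simp at hu; subst hu; exact h rfl

lemma Ctx.del1 {S : Finset V} {μ : V → V → ℤ} {c q r : V → ℤ} (H : Ctx S μ c q r) {u w : V}
    (hu : u ∈ S) (hw : w ∈ S) (huw : u ≠ w) (hm : 1 ≤ μ u w)
    (h1 : 4 + a6 (b q r {u} - 1) ≤ D S μ c {u} - 1) (h2 : 4 + a6 (b q r {w} + 1) ≤ D S μ c {w} - 1) :
    False := by
  refine H.ns (sol_del hu hw huw (H.ih2 _ c q _ ?_ ?_))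
  · unfold NN
    simp only [sum_sub_distrib]
    have : 0 < ∑ i ∈ S, ∑ j ∈ S, ed u w i j := by
      refine sum_pos' (fun i _ => sum_nonneg fun j _ => ?_) ⟨u, hu, sum_pos' (fun j _ => ?_) ⟨w, hw, ?_⟩⟩
      · unfold ed; split_ifs <;> norm_num
      · unfold ed; split_ifs <;> norm_num
      · simp [ed, huw]
    omega
  · refine ⟨⟨?_, ?_, H.qc, H.qp, ?_, ?_, H.z⟩, ?_⟩
    · intro i j; have := H.sym i j; simp only [ed]; rw [this]
      simp only [and_comm (a := j = u), and_comm (a := j = w)]; ring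
    · intro i j
      have h0 := H.nn i j
      have hs := H.sym u w
      simp only [ed]
      by_cases e1 : i = u ∧ j = w
      · obtain ⟨rfl, rfl⟩ := e1; simp [huw]; omega
      · by_cases e2 : i = w ∧ j = u
        · obtain ⟨rfl, rfl⟩ := e2; simp [Ne.symm huw]; omega
        · simp [e1, e2]; omega
    · intro i hi
      have := H.par i hi
      rw [cw_sub, cw_ed _ _ _ _ hu hw]
      simp only [mem_singleton, dl]
      by_cases e1 : i = u
      · subst e1; simp [Ne.symm huw, huw]; omega
      · by_cases e2 : i = w
        · subst e2; simp [Ne.symm huw, huw]; omega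
        · simp [e1, e2, Ne.symm e1, Ne.symm e2]; omega
    · have := H.tot
      simp only [sum_add_distrib, sum_sub_distrib, sum_dl, hu, hw, if_true]
      omega
    · intro A hA hAn hAS
      have hc := H.cutD hA hAn hAS
      rw [cw_sub, cw_ed _ _ _ _ hu hw]
      have e : ∑ i ∈ A, (r i - dl u i + dl w i + q i) = b q r A - (if u ∈ A then 1 else 0) + (if w ∈ A then 1 else 0) := by
        simp only [b, sum_add_distrib, sum_sub_distrib, sum_dl]; ring
      rw [e]
      have e2 : D S μ c A = cw S μ A + ∑ i ∈ A, c i := rfl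
      by_cases g1 : u ∈ A <;> by_cases g2 : w ∈ A <;> simp only [g1, g2, true_and, not_true, not_false_eq_true, if_true, if_false, false_and, and_false]
      · rw [show b q r A - 1 + 1 = b q r A by ring]; omega
      · by_cases hA1 : A = {u}
        · rw [hA1] at e2 ⊢; rw [add_zero]; omega
        · have := H.P1 hA hAS (two_le g1 hA1)
          unfold a6 at *; omega
      · by_cases hA1 : A = {w}
        · rw [hA1] at e2 ⊢; rw [sub_zero]; omega
        · have := H.P1 hA hAS (two_le g2 hA1)
          unfold a6 at *; omega
      · rw [sub_zero, add_zero]; omega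

lemma Ctx.del2 {S : Finset V} {μ : V → V → ℤ} {c q r : V → ℤ} (H : Ctx S μ c q r) {w : V}
    (hw : w ∈ S) (s t : ℤ) (hs : s = 1 ∨ s = -1) (ht : |t| ≤ c w - 1) (ht6 : (6:ℤ) ∣ t - (q w - s))
    (h1 : 4 + a6 (b q r {w} - s) ≤ D S μ c {w} - 1) : False := by
  have cc : ∀ A : Finset V, ∑ i ∈ A, (c i - dl w i) = ∑ i ∈ A, c i - if w ∈ A then 1 else 0 := by
    intro A; rw [sum_sub_distrib, sum_dl]
  have qq : ∀ A : Finset V, ∑ i ∈ A, (q i + (t - q w) * dl w i) = ∑ i ∈ A, q i + if w ∈ A then t - q w else 0 := by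
    intro A; rw [sum_add_distrib, ← mul_sum, sum_dl]; simp
  refine H.ns (H.ih2 μ (fun i => c i - dl w i) (fun i => q i + (t - q w) * dl w i) r ?_ ?_)
  · unfold NN
    rw [cc, if_pos hw]; omega
  · refine ⟨⟨H.sym, H.nn, ?_, ?_, H.par, H.tot, ?_⟩, ?_⟩
    · intro i hi
      have := H.qc i hi
      by_cases e : i = w
      · subst e; simp [dl]; omega
      · simp [dl, e]; exact this
    · intro i hi
      have := H.qp i hi
      by_cases e : i = w
      · subst e; simp [dl]; omega
      · simp [dl, e]; exact this
    · rw [cc, qq, if_pos hw, if_pos hw]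
      have := H.z
      unfold a6 at *; omega
    · intro A hA hAn hAS
      have hc := H.cutD hA hAn hAS
      have e : ∑ i ∈ A, (r i + (q i + (t - q w) * dl w i)) = b q r A + if w ∈ A then t - q w else 0 := by
        rw [sum_add_distrib, qq, b, sum_add_distrib]; ring
      rw [cc, e]
      have e2 : D S μ c A = cw S μ A + ∑ i ∈ A, c i := rfl
      by_cases g1 : w ∈ A
      · simp only [g1, if_true]
        by_cases hA1 : A = {w}
        · rw [hA1] at e2 ⊢
          rw [a6_congr (y := b q r {w} - s)] <;> omega
        · have := H.P1 hA hAS (two_le g1 hA1)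
          unfold a6 at *; omega
      · simp only [g1, if_false]; rw [add_zero]; omega

end LT

open Finset
namespace LT
variable {V : Type} [DecidableEq V]

/-- Lifting the pair of edges `xv`, `yv`. -/
def lf (μ : V → V → ℤ) (x y v : V) : V → V → ℤ :=
  fun i j => μ i j - ed x v i j - ed y v i j + ed x y i j

lemma ed_sym (x y i j : V) : ed x y i j = ed x y j i := by
  unfold ed; simp only [and_comm (a := j = x), and_comm (a := j = y)]; ring

lemma lf_sym {μ : V → V → ℤ} (sym : ∀ i j, μ i j = μ j i) (x y v : V) (i j : V) :
    lf μ x y v i j = lf μ x y v j i := by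
  unfold lf; rw [sym i j, ed_sym x v, ed_sym y v, ed_sym x y]

lemma lf_v (μ : V → V → ℤ) {x y v : V} (hx : x ≠ v) (hy : y ≠ v) {j : V} (_hj : j ≠ v) :
    lf μ x y v v j = μ v j - dl x j - dl y j := by
  simp [lf, ed, dl, Ne.symm hx, Ne.symm hy]

lemma lf_nn {μ : V → V → ℤ} (sym : ∀ i j, μ i j = μ j i) (nn : ∀ i j, 0 ≤ μ i j)
    {x y v : V} (hx : x ≠ v) (hy : y ≠ v) (h : ∀ j, dl x j + dl y j ≤ μ v j) (i j : V) :
    0 ≤ lf μ x y v i j := by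
  have h0 := nn i j
  have e0 : 0 ≤ ed x y i j := by unfold ed; split_ifs <;> norm_num
  by_cases hi : i = v
  · subst hi
    by_cases hj : j = i
    · subst hj; simp only [lf, ed] at *; simp [hx, hy, Ne.symm hx, Ne.symm hy]; exact h0
    · rw [lf_v μ hx hy hj]; have := h j; omega
  · by_cases hj : j = v
    · subst hj
      rw [lf_sym sym, lf_v μ hx hy hi]; have := h i; omega
    · have : lf μ x y v i j = μ i j + ed x y i j := by simp [lf, ed, hi, hj]
      omega

lemma cw_lf {S : Finset V} (μ : V → V → ℤ) {x y v : V} (hx : x ∈ S) (hy : y ∈ S) (hv : v ∈ S)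
    (A : Finset V) :
    cw S (lf μ x y v) A = cw S μ A - 2 * (if x ∈ A ∧ y ∈ A ∧ v ∉ A then 1 else 0)
      - 2 * (if x ∉ A ∧ y ∉ A ∧ v ∈ A then 1 else 0) := by
  have : cw S (lf μ x y v) A = cw S μ A - cw S (ed x v) A - cw S (ed y v) A + cw S (ed x y) A := by
    unfold lf
    rw [cw_add S (fun i j => μ i j - ed x v i j - ed y v i j), cw_sub S (fun i j => μ i j - ed x v i j), cw_sub]
  rw [this, cw_ed _ _ _ _ hx hv, cw_ed _ _ _ _ hy hv, cw_ed _ _ _ _ hx hy]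
  by_cases h1 : x ∈ A <;> by_cases h2 : y ∈ A <;> by_cases h3 : v ∈ A <;> simp [h1, h2, h3] <;> ring

lemma sol_lift {S : Finset V} {μ : V → V → ℤ} {r : V → ℤ} (sym : ∀ i j, μ i j = μ j i)
    (nn : ∀ i j, 0 ≤ μ i j) {x y v : V} (hx : x ∈ S) (hy : y ∈ S) (hv : v ∈ S)
    (hxv : x ≠ v) (hyv : y ≠ v) (h : Sol S (lf μ x y v) r) : Sol S μ r := by
  obtain ⟨f, fa, fb, fn⟩ := h
  obtain ⟨s, hs, hb⟩ := lift_flow sym nn hx hy hv hxv hyv fa (fun _ _ => True)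
    (fun i hi j hj hij _ => fb i hi j hj hij) trivial
  refine ⟨_, ?_, fun i hi j hj hij => hb i hi j hj hij trivial, ?_⟩
  · intro i j; rw [fa i j, ar_anti x v i j, ar_anti v y i j, ar_anti y x i j]; ring
  · intro i hi
    have := fn i hi
    rw [sum_add_distrib, ← mul_sum, sum_add_distrib, sum_add_distrib, sum_ar S hx hv, sum_ar S hv hy, sum_ar S hy hx]
    rw [show dl x i - dl v i + (dl v i - dl y i) + (dl y i - dl x i) = 0 by ring, mul_zero, add_zero]
    exact this

lemma basic_lift {S : Finset V} {μ : V → V → ℤ} {c q r : V → ℤ} (H : Basic S μ c q r)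
    {x y v : V} (hx : x ∈ S) (hy : y ∈ S) (hv : v ∈ S)
    (hxv : x ≠ v) (hyv : y ≠ v) (h : ∀ j, dl x j + dl y j ≤ μ v j) : Basic S (lf μ x y v) c q r := by
  refine ⟨lf_sym H.sym x y v, lf_nn H.sym H.nn hxv hyv h, H.qc, H.qp, ?_, H.tot, H.z⟩
  intro i hi
  have := H.par i hi
  rw [cw_lf μ hx hy hv]
  omega

lemma pick {T : Finset V} (m : V → ℤ) (h : 1 ≤ ∑ j ∈ T, m j) : ∃ n ∈ T, 1 ≤ m n := by
  by_contra hc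
  push Not at hc
  have : ∑ j ∈ T, m j ≤ 0 := sum_nonpos fun j hj => by have := hc j hj; omega
  omega

lemma pick_dl {T : Finset V} (m : V → ℤ) (hm : ∀ j, 0 ≤ m j) {k : ℤ} (hk : 0 ≤ k) (h : ∑ j ∈ T, m j = k + 1) :
    ∃ n ∈ T, (∀ j, 0 ≤ m j - dl n j) ∧ ∑ j ∈ T, (m j - dl n j) = k := by
  obtain ⟨n, hn, h1⟩ := pick m (T := T) (by omega)
  refine ⟨n, hn, ?_, ?_⟩
  · intro j; have := hm j; unfold dl; split_ifs with e
    · subst e; omega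
    · omega
  · rw [sum_sub_distrib, sum_dl, if_pos hn]; omega

lemma zero_of_sum {T : Finset V} {m : V → ℤ} (hm : ∀ j, 0 ≤ m j) (h : ∑ j ∈ T, m j = 0) : ∀ j ∈ T, m j = 0 :=
  (sum_eq_zero_iff_of_nonneg (fun j _ => hm j)).1 h

lemma cw_single (S : Finset V) (μ : V → V → ℤ) (v : V) : cw S μ {v} = ∑ j ∈ S \ {v}, μ v j := by
  simp [cw]

lemma D_insert {S : Finset V} {μ : V → V → ℤ} {c : V → ℤ} (sym : ∀ i j, μ i j = μ j i) {A : Finset V} {v : V}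
    (hA : A ⊆ S) (hv : v ∈ S) (hvA : v ∉ A) :
    D S μ c (insert v A) = D S μ c A + D S μ c {v} - 2 * ∑ j ∈ A, μ v j := by
  unfold D; rw [cw_insert sym hA hv hvA, sum_insert hvA, sum_singleton]; ring

lemma b_insert {q r : V → ℤ} {A : Finset V} {v : V} (hvA : v ∉ A) :
    b q r (insert v A) = b q r A + b q r {v} := by
  unfold b; rw [sum_insert hvA, sum_singleton]; ring

lemma b_compl {S : Finset V} {μ : V → V → ℤ} {c q r : V → ℤ} (H : Basic S μ c q r) {A : Finset V} (hA : A ⊆ S) :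
    (6:ℤ) ∣ b q r (S \ A) - (∑ i ∈ S, q i - b q r A) := by
  have h := H.tot
  have h1 : b q r (S \ A) + b q r A = ∑ i ∈ S, (r i + q i) := sum_sdiff hA
  rw [sum_add_distrib] at h1
  omega

lemma D_compl {S : Finset V} {μ : V → V → ℤ} {c : V → ℤ} (sym : ∀ i j, μ i j = μ j i) {A : Finset V} (hA : A ⊆ S) :
    D S μ c (S \ A) = cw S μ A + ∑ i ∈ S, c i - ∑ i ∈ A, c i := by
  unfold D; rw [cw_compl sym hA, ← sum_sdiff hA]; ring

lemma Ctx.sdiff_card {S : Finset V} {μ : V → V → ℤ} {c q r : V → ℤ} (H : Ctx S μ c q r) {v : V} (hv : v ∈ S) :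
    2 ≤ (S \ {v}).card := by
  have := card_sdiff_add_card_eq_card (singleton_subset_iff.2 hv)
  have := H.c3
  simp at *; omega

lemma sdiff_ne {S : Finset V} {v : V} (hv : v ∈ S) : S \ {v} ≠ S := by
  intro h; rw [← h] at hv; simp at hv

lemma insert_ne {S A : Finset V} {v : V} (hA : A ⊆ S \ {v}) (hne : A ≠ S \ {v}) : insert v A ≠ S := by
  intro h; apply hne
  have hvA : v ∉ A := fun h => by have := hA h; simp at this
  ext x
  rw [← h]
  simp only [mem_sdiff, mem_insert, mem_singleton]
  constructor
  · intro hx; exact ⟨Or.inr hx, by rintro rfl; exact hvA hx⟩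
  · tauto

lemma Ctx.cv_le {S : Finset V} {μ : V → V → ℤ} {c q r : V → ℤ} (H : Ctx S μ c q r) {v : V} (hv : v ∈ S) :
    6 + a6 (∑ i ∈ S, q i - b q r {v}) ≤ cw S μ {v} + ∑ i ∈ S, c i - c v := by
  have hs := singleton_subset_iff.2 hv
  have h1 := H.P1 sdiff_subset (sdiff_ne hv) (H.sdiff_card hv)
  rw [D_compl H.sym hs, a6_congr (b_compl H.toBasic hs), sum_singleton] at h1
  exact h1

lemma Ctx.T0 {S : Finset V} {μ : V → V → ℤ} {c q r : V → ℤ} (H : Ctx S μ c q r) {v : V} (hv : v ∈ S)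
    (hD : D S μ c {v} = 4) (hb : (6:ℤ) ∣ b q r {v}) : False := by
  have hs := singleton_subset_iff.2 hv
  have hc := H.cv_le hv
  have hz := H.z
  have hD' : cw S μ {v} + c v = 4 := by rw [← hD]; simp [D]
  have hbv : b q r {v} = r v + q v := by simp [b]
  have hcv : c v ≤ 1 := by
    rw [a6_congr (y := ∑ i ∈ S, q i) (by omega)] at hc; omega
  have hqc := H.qc v hv
  have hqp := H.qp v hv
  have hc0 : 0 ≤ c v := (abs_nonneg _).trans hqc
  have hSS : S \ (S \ {v}) = {v} := Finset.sdiff_sdiff_eq_self hs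
  have hvv : v ∉ S \ {v} := by simp
  have bS : (6:ℤ) ∣ b q r (S \ {v}) - ∑ i ∈ S, q i := by
    have := b_compl H.toBasic hs; omega
  have ins : ∀ A ⊆ S \ {v}, A.Nonempty → A ≠ S \ {v} →
      6 + a6 (b q r A) ≤ D S μ c A + 4 - 2 * ∑ j ∈ A, μ v j := by
    intro A hA hn hne
    have hvA : v ∉ A := fun h => hvv (hA h)
    have hAS : A ⊆ S := hA.trans sdiff_subset
    have h1 := H.P1 (insert_subset hv hAS) (insert_ne hA hne)
      (by rw [card_insert_of_notMem hvA]; have := card_pos.2 hn; omega)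
    rw [D_insert H.sym hAS hv hvA, b_insert hvA, hD, a6_congr (y := b q r A) (by omega)] at h1
    exact h1
  have sub : ∀ A ⊆ S \ {v}, A.Nonempty → A ≠ S \ {v} → 4 + a6 (b q r A) ≤ D S μ c A := by
    intro A hA hn hne
    exact H.cutD (hA.trans sdiff_subset) hn (by rintro rfl; exact hvv (hA hv))
  have hcw := cw_single S μ v
  have m0 : ∀ j, 0 ≤ μ v j := H.nn v
  have inS : ∀ n, n ∈ S \ {v} → n ∈ S ∧ n ≠ v := by intro n; simp
  rcases (by omega : c v = 0 ∨ c v = 1) with hcv | hcv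
  · obtain ⟨n1, h1, p1, s1⟩ := pick_dl (T := S \ {v}) (fun j => μ v j) m0 (k := 3) (by norm_num) (by omega)
    obtain ⟨n2, h2, p2, s2⟩ := pick_dl (T := S \ {v}) _ p1 (k := 2) (by norm_num) s1
    obtain ⟨n3, h3, p3, s3⟩ := pick_dl (T := S \ {v}) _ p2 (k := 1) (by norm_num) s2
    obtain ⟨n4, h4, p4, s4⟩ := pick_dl (T := S \ {v}) _ p3 (k := 0) (by norm_num) s3
    have zz := zero_of_sum p4 s4
    obtain ⟨h1S, h1v⟩ := inS n1 h1
    obtain ⟨h2S, h2v⟩ := inS n2 h2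
    obtain ⟨h3S, h3v⟩ := inS n3 h3
    obtain ⟨h4S, h4v⟩ := inS n4 h4
    have B1 : Basic S (lf μ n1 n2 v) c q r :=
      basic_lift H.toBasic h1S h2S hv h1v h2v (fun j => by have := p2 j; omega)
    have dl0 : ∀ n, n ≠ v → dl n v = 0 := by intro n hn; simp [dl, Ne.symm hn]
    have B2 : Basic S (lf (lf μ n1 n2 v) n3 n4 v) c q r := by
      refine basic_lift B1 h3S h4S hv h3v h4v (fun j => ?_)
      by_cases hj : j = v
      · subst hj; have := B1.nn j j; rw [dl0 n3 h3v, dl0 n4 h4v]; omega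
      · rw [lf_v μ h1v h2v hj]; have := p4 j; omega
    have z2 : ∀ j ∈ S, j ≠ v → lf (lf μ n1 n2 v) n3 n4 v v j = 0 := by
      intro j hj hjv
      rw [lf_v _ h3v h4v hjv, lf_v _ h1v h2v hjv]
      exact zz j (by simp [hj, hjv])
    have fb : ∀ i ∈ S, ∀ j ∈ S, i ≠ j → ¬ (i ∈ S \ {v} ∧ j ∈ S \ {v}) →
        |(0:ℤ)| ≤ lf (lf μ n1 n2 v) n3 n4 v i j ∧ (2:ℤ) ∣ 0 - lf (lf μ n1 n2 v) n3 n4 v i j := by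
      intro i hi j hj hij hn
      have : lf (lf μ n1 n2 v) n3 n4 v i j = 0 := by
        by_cases hiv : i = v
        · subst hiv; exact z2 j hj (Ne.symm hij)
        · have hjv : j = v := by by_contra h; apply hn; simp [hi, hj, hiv, h]
          subst hjv; rw [B2.sym]; exact z2 i hi hiv
      rw [this]; simp
    have dA : ∀ A : Finset V, v ∉ A → D S (lf (lf μ n1 n2 v) n3 n4 v) c A = D S μ c A
        - 2 * (if n1 ∈ A ∧ n2 ∈ A then 1 else 0) - 2 * (if n3 ∈ A ∧ n4 ∈ A then 1 else 0) := by
      intro A hvA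
      unfold D
      rw [cw_lf _ h3S h4S hv, cw_lf _ h1S h2S hv]
      simp only [hvA, and_false, not_false_eq_true, and_true, if_false]; ring
    refine H.ns (sol_lift H.sym H.nn h1S h2S hv h1v h2v (sol_lift B1.sym B1.nn h3S h4S hv h3v h4v ?_))
    refine inner_k B2 H.ih1 sdiff_subset (sdiff_ne hv) (fun _ _ => 0) (by simp) fb ?_ (fun _ => 0) ?_ ?_ ?_
    · intro i hi
      rw [hSS, mem_singleton] at hi; subst hi
      have : q i = 0 := by rw [hcv] at hqc; simpa using hqc
      simp; omega
    · simpa using std_bound B2 sdiff_subset (fun _ _ => 0) fb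
    · rw [sum_const_zero, sub_zero, sub_zero, dA _ hvv, D_compl H.sym hs, sum_singleton]
      simp only [h1, h2, h3, h4, and_self, if_true]
      rw [a6_congr bS]; omega
    · intro A hA hn hne
      have hvA : v ∉ A := fun h => hvv (hA h)
      rw [sum_const_zero, sub_zero, sub_zero, dA A hvA]
      have i1 := ins A hA hn hne
      have i2 := sub A hA hn hne
      have e : ∑ j ∈ A, μ v j = (if n1 ∈ A then 1 else 0) + (if n2 ∈ A then 1 else 0)
          + (if n3 ∈ A then 1 else 0) + (if n4 ∈ A then 1 else 0) := by
        rw [← sum_dl, ← sum_dl, ← sum_dl, ← sum_dl, ← sum_add_distrib, ← sum_add_distrib, ← sum_add_distrib]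
        exact sum_congr rfl fun j hj => by have := zz j (hA hj); omega
      by_cases g1 : n1 ∈ A <;> by_cases g2 : n2 ∈ A <;> by_cases g3 : n3 ∈ A <;> by_cases g4 : n4 ∈ A <;>
        simp only [g1, g2, g3, g4, and_self, and_true, true_and, and_false, false_and, if_true, if_false] at e ⊢ <;> omega
  · obtain ⟨n2, h2, p2, s2⟩ := pick_dl (T := S \ {v}) (fun j => μ v j) m0 (k := 2) (by norm_num) (by omega)
    obtain ⟨n3, h3, p3, s3⟩ := pick_dl (T := S \ {v}) _ p2 (k := 1) (by norm_num) s2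
    obtain ⟨n4, h4, p4, s4⟩ := pick_dl (T := S \ {v}) _ p3 (k := 0) (by norm_num) s3
    have zz := zero_of_sum p4 s4
    obtain ⟨h2S, h2v⟩ := inS n2 h2
    obtain ⟨h3S, h3v⟩ := inS n3 h3
    obtain ⟨h4S, h4v⟩ := inS n4 h4
    have dlnn : ∀ n j : V, 0 ≤ dl n j := by intro n j; unfold dl; split_ifs <;> norm_num
    have B2 : Basic S (lf μ n3 n4 v) c q r :=
      basic_lift H.toBasic h3S h4S hv h3v h4v (fun j => by have := p4 j; have := dlnn n2 j; omega)
    have z2 : ∀ j ∈ S, j ≠ v → lf μ n3 n4 v v j = dl n2 j := by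
      intro j hj hjv
      rw [lf_v _ h3v h4v hjv]
      have := zz j (by simp [hj, hjv])
      omega
    have hq : q v = 1 ∨ q v = -1 := by rw [hcv, abs_le] at hqc; omega
    have arv : ∀ j, ar v n2 v j = dl n2 j := by intro j; simp [ar, dl, Ne.symm h2v]
    have fa : ∀ i j, -q v * ar v n2 j i = - (-q v * ar v n2 i j) := by
      intro i j; rw [ar_anti v n2 i j]; ring
    have fb : ∀ i ∈ S, ∀ j ∈ S, i ≠ j → ¬ (i ∈ S \ {v} ∧ j ∈ S \ {v}) →
        |-q v * ar v n2 i j| ≤ lf μ n3 n4 v i j ∧ (2:ℤ) ∣ -q v * ar v n2 i j - lf μ n3 n4 v i j := by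
      intro i hi j hj hij hn
      have key : ∀ j ∈ S, j ≠ v → |-q v * ar v n2 v j| ≤ lf μ n3 n4 v v j ∧ (2:ℤ) ∣ -q v * ar v n2 v j - lf μ n3 n4 v v j := by
        intro j hj hjv
        rw [z2 j hj hjv, arv]
        unfold dl
        split_ifs <;> rcases hq with h | h <;> rw [h] <;> simp
      by_cases hiv : i = v
      · subst hiv; exact key j hj (Ne.symm hij)
      · have hjv : j = v := by by_contra h; apply hn; simp [hi, hj, hiv, h]
        subst hjv
        have := key i hi hiv
        rw [B2.sym, fa, abs_neg]
        exact ⟨this.1, by omega⟩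
    have dA : ∀ A : Finset V, v ∉ A → D S (lf μ n3 n4 v) c A = D S μ c A
        - 2 * (if n3 ∈ A ∧ n4 ∈ A then 1 else 0) := by
      intro A hvA
      unfold D
      rw [cw_lf _ h3S h4S hv]
      simp only [hvA, and_false, not_false_eq_true, and_true, if_false]; ring
    refine H.ns (sol_lift H.sym H.nn h3S h4S hv h3v h4v ?_)
    refine inner_k B2 H.ih1 sdiff_subset (sdiff_ne hv) (fun i j => -q v * ar v n2 i j) fa fb ?_ (fun _ => 0) ?_ ?_ ?_
    · intro i hi
      rw [hSS, mem_singleton] at hi; subst hi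
      rw [← mul_sum, sum_ar S hv h2S]
      have : dl n2 i = 0 := by simp [dl, Ne.symm h2v]
      rw [this]; simp only [dl, if_true]; omega
    · simpa using std_bound B2 sdiff_subset _ fb
    · rw [sum_const_zero, sub_zero, sub_zero, dA _ hvv, D_compl H.sym hs, sum_singleton]
      simp only [h3, h4, and_self, if_true]
      rw [a6_congr bS]; omega
    · intro A hA hn hne
      have hvA : v ∉ A := fun h => hvv (hA h)
      rw [sum_const_zero, sub_zero, sub_zero, dA A hvA]
      have i1 := ins A hA hn hne
      have i2 := sub A hA hn hne
      have e : ∑ j ∈ A, μ v j = (if n2 ∈ A then 1 else 0)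
          + (if n3 ∈ A then 1 else 0) + (if n4 ∈ A then 1 else 0) := by
        rw [← sum_dl, ← sum_dl, ← sum_dl, ← sum_add_distrib, ← sum_add_distrib]
        exact sum_congr rfl fun j hj => by have := zz j (hA hj); omega
      by_cases g2 : n2 ∈ A <;> by_cases g3 : n3 ∈ A <;> by_cases g4 : n4 ∈ A <;>
        simp only [g2, g3, g4, and_self, and_true, true_and, and_false, false_and, if_true, if_false] at e ⊢ <;> omega

end LT

open Finset
namespace LT
variable {V : Type} [DecidableEq V]

lemma Sol.neg {S : Finset V} {μ : V → V → ℤ} {r : V → ℤ} (h : Sol S μ r) : Sol S μ (fun i => - r i) := by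
  obtain ⟨f, fa, fb, fn⟩ := h
  refine ⟨fun i j => - f i j, ?_, ?_, ?_⟩
  · intro i j; simp only; rw [fa i j]
  · intro i hi j hj hij
    have := fb i hi j hj hij
    simp only [abs_neg]
    exact ⟨this.1, by omega⟩
  · intro i hi
    have := fn i hi
    rw [sum_neg_distrib]; beta_reduce; omega

lemma Good.neg {S : Finset V} {μ : V → V → ℤ} {c q r : V → ℤ} (H : Good S μ c q r) :
    Good S μ c (fun i => - q i) (fun i => - r i) := by
  refine ⟨⟨H.sym, H.nn, ?_, ?_, ?_, ?_, ?_⟩, ?_⟩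
  · intro i hi; simp only [abs_neg]; exact H.qc i hi
  · intro i hi; have := H.qp i hi; omega
  · intro i hi; have := H.par i hi; omega
  · have := H.tot; rw [sum_neg_distrib]; omega
  · have := H.z; rw [sum_neg_distrib]; unfold a6 at *; omega
  · intro A hA hn hne
    have := H.cut A hA hn hne
    rw [sum_add_distrib] at this ⊢
    rw [sum_neg_distrib, sum_neg_distrib]
    unfold a6 at *; omega

lemma Ctx.neg {S : Finset V} {μ : V → V → ℤ} {c q r : V → ℤ} (H : Ctx S μ c q r) :
    Ctx S μ c (fun i => - q i) (fun i => - r i) :=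
  ⟨H.toGood.neg, H.ih1, H.ih2, fun h => H.ns (by simpa using h.neg), H.c3⟩

lemma Ctx.single_ne {S : Finset V} {μ : V → V → ℤ} {c q r : V → ℤ} (H : Ctx S μ c q r) (v : V) : {v} ≠ S := by
  intro h; have := H.c3; rw [← h] at this; simp at this

/-- reduction in the negative direction is possible -/
def cm (S : Finset V) (μ : V → V → ℤ) (c q r : V → ℤ) (v : V) : Prop :=
  4 + a6 (b q r {v} - 1) ≤ D S μ c {v} - 1

/-- reduction in the positive direction is possible -/
def cp (S : Finset V) (μ : V → V → ℤ) (c q r : V → ℤ) (v : V) : Prop :=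
  4 + a6 (b q r {v} + 1) ≤ D S μ c {v} - 1

/-- tight and positive -/
def tp (S : Finset V) (μ : V → V → ℤ) (c q r : V → ℤ) (v : V) : Prop :=
  (b q r {v} % 6 = 1 ∧ D S μ c {v} = 5) ∨ (b q r {v} % 6 = 2 ∧ D S μ c {v} = 6)

/-- tight and negative -/
def tn (S : Finset V) (μ : V → V → ℤ) (c q r : V → ℤ) (v : V) : Prop :=
  (b q r {v} % 6 = 5 ∧ D S μ c {v} = 5) ∨ (b q r {v} % 6 = 4 ∧ D S μ c {v} = 6)

lemma Ctx.types {S : Finset V} {μ : V → V → ℤ} {c q r : V → ℤ} (H : Ctx S μ c q r) {v : V} (hv : v ∈ S) :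
    (cm S μ c q r v ∧ cp S μ c q r v) ∨ (tp S μ c q r v ∧ cm S μ c q r v) ∨
      (tn S μ c q r v ∧ cp S μ c q r v) := by
  have hs := singleton_subset_iff.2 hv
  have h1 := H.cutD hs (singleton_nonempty v) (H.single_ne v)
  have h2 : (2:ℤ) ∣ D S μ c {v} - b q r {v} := H.parD {v} hs
  have h3 := fun h h' => H.T0 hv h h'
  unfold cm cp tp tn
  generalize D S μ c {v} = d at *
  generalize b q r {v} = x at *
  have h3' : ¬ (d = 4 ∧ (6:ℤ) ∣ x) := fun h => h3 h.1 h.2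
  clear h3 H hs hv
  have h6 : x % 6 = 0 ∨ x % 6 = 1 ∨ x % 6 = 2 ∨ x % 6 = 3 ∨ x % 6 = 4 ∨ x % 6 = 5 := by omega
  rcases h6 with h | h | h | h | h | h
  · have e1 : a6 x = 0 := by unfold a6; omega
    have e2 : a6 (x - 1) = 1 := by unfold a6; omega
    have e3 : a6 (x + 1) = 1 := by unfold a6; omega
    rw [e1] at h1
    rw [e2, e3]
    exact Or.inl ⟨by omega, by omega⟩
  · have e1 : a6 x = 1 := by unfold a6; omega
    have e2 : a6 (x - 1) = 0 := by unfold a6; omega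
    have e3 : a6 (x + 1) = 2 := by unfold a6; omega
    rw [e1] at h1
    rw [e2, e3]
    by_cases hd : d = 5
    · exact Or.inr (Or.inl ⟨by omega, by omega⟩)
    · exact Or.inl ⟨by omega, by omega⟩
  · have e1 : a6 x = 2 := by unfold a6; omega
    have e2 : a6 (x - 1) = 1 := by unfold a6; omega
    have e3 : a6 (x + 1) = 3 := by unfold a6; omega
    rw [e1] at h1
    rw [e2, e3]
    by_cases hd : d = 6
    · exact Or.inr (Or.inl ⟨by omega, by omega⟩)
    · exact Or.inl ⟨by omega, by omega⟩
  · have e1 : a6 x = 3 := by unfold a6; omega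
    have e2 : a6 (x - 1) = 2 := by unfold a6; omega
    have e3 : a6 (x + 1) = 2 := by unfold a6; omega
    rw [e1] at h1
    rw [e2, e3]
    exact Or.inl ⟨by omega, by omega⟩
  · have e1 : a6 x = 2 := by unfold a6; omega
    have e2 : a6 (x - 1) = 3 := by unfold a6; omega
    have e3 : a6 (x + 1) = 1 := by unfold a6; omega
    rw [e1] at h1
    rw [e2, e3]
    by_cases hd : d = 6
    · exact Or.inr (Or.inr ⟨by omega, by omega⟩)
    · exact Or.inl ⟨by omega, by omega⟩
  · have e1 : a6 x = 1 := by unfold a6; omega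
    have e2 : a6 (x - 1) = 2 := by unfold a6; omega
    have e3 : a6 (x + 1) = 0 := by unfold a6; omega
    rw [e1] at h1
    rw [e2, e3]
    by_cases hd : d = 5
    · exact Or.inr (Or.inr ⟨by omega, by omega⟩)
    · exact Or.inl ⟨by omega, by omega⟩

lemma Ctx.edge {S : Finset V} {μ : V → V → ℤ} {c q r : V → ℤ} (H : Ctx S μ c q r) {u w : V}
    (hu : u ∈ S) (hw : w ∈ S) (huw : u ≠ w) (hm : 1 ≤ μ u w) :
    (tp S μ c q r u ∧ tp S μ c q r w) ∨ (tn S μ c q r u ∧ tn S μ c q r w) := by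
  have h1 := fun h h' => H.del1 hu hw huw hm h h'
  have h2 := fun h h' => H.del1 hw hu (Ne.symm huw) (by rw [H.sym]; exact hm) h h'
  have t1 := H.types hu
  have t2 := H.types hw
  change cm S μ c q r u → cp S μ c q r w → False at h1
  change cm S μ c q r w → cp S μ c q r u → False at h2
  tauto

lemma Ctx.zedge {S : Finset V} {μ : V → V → ℤ} {c q r : V → ℤ} (H : Ctx S μ c q r) {v : V}
    (hv : v ∈ S) (hc : 1 ≤ c v) :
    (tp S μ c q r v ∧ q v = - c v ∧ c v ≤ 2) ∨ (tn S μ c q r v ∧ q v = c v ∧ c v ≤ 2) := by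
  have hqc := abs_le.1 (H.qc v hv)
  have hqp := H.qp v hv
  have h1 : cm S μ c q r v → q v = - c v ∧ c v ≤ 2 := by
    intro h
    by_contra hcon
    by_cases hq : q v = - c v
    · refine H.del2 hv 1 (q v - 1 + 6) (Or.inl rfl) ?_ (by omega) h
      rw [abs_le]; omega
    · refine H.del2 hv 1 (q v - 1) (Or.inl rfl) ?_ (by omega) h
      rw [abs_le]; omega
  have h2 : cp S μ c q r v → q v = c v ∧ c v ≤ 2 := by
    intro h
    have h' : 4 + a6 (b q r {v} - (-1)) ≤ D S μ c {v} - 1 := by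
      rw [sub_neg_eq_add]; exact h
    by_contra hcon
    by_cases hq : q v = c v
    · refine H.del2 hv (-1) (q v + 1 - 6) (Or.inr rfl) ?_ (by omega) h'
      rw [abs_le]; omega
    · refine H.del2 hv (-1) (q v + 1) (Or.inr rfl) ?_ (by omega) h'
      rw [abs_le]; omega
  have t1 := H.types hv
  rcases t1 with ⟨h, h'⟩ | ⟨h, h'⟩ | ⟨h, h'⟩
  · have := h1 h; have := h2 h'; omega
  · exact Or.inl ⟨h, h1 h'⟩
  · exact Or.inr ⟨h, h2 h'⟩

lemma Ctx.tpn {S : Finset V} {μ : V → V → ℤ} {c q r : V → ℤ} (H : Ctx S μ c q r) {v : V} (hv : v ∈ S) :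
    tp S μ c q r v ∨ tn S μ c q r v := by
  by_cases hc : 1 ≤ c v
  · rcases H.zedge hv hc with h | h
    · exact Or.inl h.1
    · exact Or.inr h.1
  · have h1 := H.cutD (singleton_subset_iff.2 hv) (singleton_nonempty v) (H.single_ne v)
    have h0 : 0 ≤ a6 (b q r {v}) := by unfold a6; omega
    simp only [D, sum_singleton, cw_single] at h1
    obtain ⟨w, hw, hm⟩ := pick (T := S \ {v}) (fun j => μ v j) (by omega)
    simp only [mem_sdiff, mem_singleton] at hw
    rcases H.edge hv hw.1 (Ne.symm hw.2) hm with h | h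
    · exact Or.inl h.1
    · exact Or.inr h.1

lemma Ctx.exc {S : Finset V} {μ : V → V → ℤ} {c q r : V → ℤ} (H : Ctx S μ c q r) : ∃ v ∈ S, 1 ≤ c v := by
  by_contra hcon
  push Not at hcon
  have hS : S.Nonempty := card_pos.1 (by have := H.c3; omega)
  obtain ⟨v, hv⟩ := hS
  have c0 : ∀ i ∈ S, c i = 0 := by
    intro i hi
    have := hcon i hi
    have := (abs_nonneg _).trans (H.qc i hi)
    omega
  have q0 : ∀ i ∈ S, q i = 0 := by
    intro i hi
    have := H.qc i hi
    rw [c0 i hi] at this; simpa using this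
  have h := H.cv_le hv
  rw [sum_eq_zero c0, sum_eq_zero q0, c0 v hv] at h
  have e : D S μ c {v} = cw S μ {v} := by simp [D, c0 v hv]
  have := H.tpn hv
  unfold tp tn at this
  rw [e] at this
  unfold a6 at h
  omega

/-- The final situation. -/
structure Pos (S : Finset V) (μ : V → V → ℤ) (c q r : V → ℤ) : Prop extends Ctx S μ c q r where
  t : ∀ v ∈ S, tp S μ c q r v
  qe : ∀ v ∈ S, q v = - c v
  c2 : ∀ v ∈ S, c v ≤ 2

lemma Ctx.allpos {S : Finset V} {μ : V → V → ℤ} {c q r : V → ℤ} (H : Ctx S μ c q r)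
    (h : ∀ v ∈ S, tp S μ c q r v) : Pos S μ c q r := by
  have key : ∀ v ∈ S, q v = - c v ∧ c v ≤ 2 := by
    intro v hv
    have h0 := H.qc v hv
    by_cases hc : 1 ≤ c v
    · rcases H.zedge hv hc with h' | h'
      · exact h'.2
      · have := h v hv; have := h'.1; unfold tp tn at *; omega
    · rw [abs_le] at h0; omega
  exact ⟨H, h, fun v hv => (key v hv).1, fun v hv => (key v hv).2⟩

lemma Ctx.posneg {S : Finset V} {μ : V → V → ℤ} {c q r : V → ℤ} (H : Ctx S μ c q r) :
    Pos S μ c q r ∨ Pos S μ c (fun i => - q i) (fun i => - r i) := by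
  classical
  by_cases h1 : ∀ v ∈ S, tp S μ c q r v
  · exact Or.inl (H.allpos h1)
  by_cases h2 : ∀ v ∈ S, tn S μ c q r v
  · refine Or.inr (H.neg.allpos fun v hv => ?_)
    have := h2 v hv
    unfold tn at this; unfold tp
    have e : b (fun i => - q i) (fun i => - r i) {v} = - b q r {v} := by simp [b]; ring
    rw [e]; omega
  exfalso
  set P := S.filter (fun v => tp S μ c q r v) with hP
  have hPS : P ⊆ S := filter_subset _ _
  have hPne : P ≠ S := by
    intro h; apply h1; intro v hv; rw [← h] at hv; exact (mem_filter.1 hv).2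
  push Not at h2
  obtain ⟨v, hv, hvn⟩ := h2
  have hvP : v ∈ P := mem_filter.2 ⟨hv, (H.tpn hv).resolve_right hvn⟩
  have hNne : (S \ P).Nonempty := by
    rw [nonempty_iff_ne_empty]; intro h
    exact hPne (Subset.antisymm hPS (sdiff_eq_empty_iff_subset.1 h))
  have hc0 : cw S μ P = 0 := by
    refine sum_eq_zero fun i hi => sum_eq_zero fun j hj => ?_
    have hi' := mem_filter.1 hi
    have hj' := mem_sdiff.1 hj
    have hij : i ≠ j := by rintro rfl; exact hj'.2 hi
    by_contra hne
    have := H.nn i j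
    have hjn : ¬ tp S μ c q r j := fun h => hj'.2 (mem_filter.2 ⟨hj'.1, h⟩)
    rcases H.edge hi'.1 hj'.1 hij (by omega) with h | h
    · exact hjn h.2
    · have := hi'.2; have := h.1; unfold tp tn at *; omega
  have d1 := H.cutD hPS ⟨v, hvP⟩ hPne
  have d2 := H.cutD (sdiff_subset (s := S) (t := P)) hNne (by
    intro h
    have := mem_sdiff.1 (h.symm ▸ hPS hvP : v ∈ S \ P)
    exact this.2 hvP)
  rw [D_compl H.sym hPS, hc0] at d2
  unfold D at d1
  rw [hc0] at d1
  have hz := H.z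
  unfold a6 at *
  omega

lemma Pos.csum {S : Finset V} {μ : V → V → ℤ} {c q r : V → ℤ} (H : Pos S μ c q r) :
    ∑ i ∈ S, q i = - ∑ i ∈ S, c i ∧ ∑ i ∈ S, c i ≤ 5 := by
  have e : ∑ i ∈ S, q i = - ∑ i ∈ S, c i := by
    rw [← sum_neg_distrib]; exact sum_congr rfl H.qe
  refine ⟨e, ?_⟩
  have hz := H.z
  rw [e] at hz
  unfold a6 at hz
  omega

lemma Pos.c0 {S : Finset V} {μ : V → V → ℤ} {c q r : V → ℤ} (H : Pos S μ c q r) : ∀ v ∈ S, 0 ≤ c v :=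
  fun v hv => (abs_nonneg _).trans (H.qc v hv)

lemma Pos.mult {S : Finset V} {μ : V → V → ℤ} {c q r : V → ℤ} (H : Pos S μ c q r) {u w : V}
    (hu : u ∈ S) (hw : w ∈ S) (huw : u ≠ w) : 4 + μ u w ≤ D S μ c {u} := by
  have hne : insert u {w} ≠ S := by
    intro h; have := H.c3; rw [← h] at this
    have := card_insert_le u {w}; simp at this; omega
  have h1 := H.P1 (insert_subset hu (singleton_subset_iff.2 hw)) hne (by
    rw [card_insert_of_notMem (by simpa using huw)]; simp)
  rw [D_insert H.sym (singleton_subset_iff.2 hw) hu (by simpa using huw), b_insert (by simpa using huw), sum_singleton] at h1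
  have t1 := H.t u hu
  have t2 := H.t w hw
  unfold tp at t1 t2
  unfold a6 at h1
  omega

end LT

open Finset
namespace LT
variable {V : Type} [DecidableEq V]

/-- An orientation of everything not inside `A`. -/
structure Part (S A : Finset V) (μ : V → V → ℤ) (r : V → ℤ) (f : V → V → ℤ) : Prop where
  fa : ∀ i j, f j i = - f i j
  fb : ∀ i ∈ S, ∀ j ∈ S, i ≠ j → ¬ (i ∈ A ∧ j ∈ A) → |f i j| ≤ μ i j ∧ (2:ℤ) ∣ f i j - μ i j
  fn : ∀ i ∈ S \ A, (6:ℤ) ∣ (∑ j ∈ S, f i j) - r i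

lemma del_nn {μ : V → V → ℤ} (sym : ∀ i j, μ i j = μ j i) (nn : ∀ i j, 0 ≤ μ i j) {u w : V}
    (huw : u ≠ w) (hm : 1 ≤ μ u w) (i j : V) : 0 ≤ μ i j - ed u w i j := by
  have h0 := nn i j
  have hs := sym u w
  simp only [ed]
  by_cases e1 : i = u ∧ j = w
  · obtain ⟨rfl, rfl⟩ := e1; simp [huw]; omega
  · by_cases e2 : i = w ∧ j = u
    · obtain ⟨rfl, rfl⟩ := e2; simp [Ne.symm huw]; omega
    · simp [e1, e2]; omega

lemma outer_z {S : Finset V} {μ : V → V → ℤ} {c q r : V → ℤ} (H : Pos S μ c q r) {A : Finset V}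
    (hA : A ⊆ S) (hA2 : 2 ≤ A.card) {w0 w y : V} (hw0 : w0 ∈ A) (hw : w ∈ A) (hy : y ∈ S) (hyA : y ∉ A)
    (hc : 1 ≤ c w0) (hm : 1 ≤ μ w y) :
    ∃ f, Part S A μ r f ∧ - μ w y + 2 ≤ f w y := by
  have hwy : w ≠ y := by rintro rfl; exact hyA hw
  have hw0y : w0 ≠ y := by rintro rfl; exact hyA hw0
  have hwS := hA hw
  have hw0S := hA hw0
  have nn' := del_nn H.sym H.nn hwy hm
  have B : Basic S (fun i j => μ i j - ed w y i j) (fun i => c i - dl w0 i + dl y i)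
      (fun i => q i + dl w0 i - dl y i) (fun i => r i - dl w i + dl y i) := by
    refine ⟨?_, nn', ?_, ?_, ?_, ?_, ?_⟩
    · intro i j; beta_reduce; rw [H.sym i j, ed_sym w y i j]
    · intro i hi
      have h1 := H.qe i hi
      have h2 := H.c0 i hi
      simp only [dl, abs_le]
      by_cases e1 : i = w0
      · subst e1; simp [hw0y]; omega
      · by_cases e2 : i = y
        · subst e2; simp [e1]; omega
        · simp [e1, e2]; omega
    · intro i hi
      have h1 := H.qe i hi
      omega
    · intro i hi
      have := H.par i hi
      rw [cw_sub, cw_ed _ _ _ _ hwS hy]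
      simp only [mem_singleton, dl]
      by_cases e1 : i = w
      · subst e1; simp [Ne.symm hwy, hwy]; omega
      · by_cases e2 : i = y
        · subst e2; simp [Ne.symm hwy, hwy]; omega
        · simp [e1, e2, Ne.symm e1, Ne.symm e2]; omega
    · have := H.tot
      simp only [sum_add_distrib, sum_sub_distrib, sum_dl, hwS, hy, if_true]
      omega
    · have := H.z
      simp only [sum_add_distrib, sum_sub_distrib, sum_dl, hw0S, hy, if_true]
      rw [add_sub_cancel_right]; omega
  obtain ⟨f0, fa, fb, fn⟩ := outer B H.ih1 hA hA2 (by
    intro B hB hn hne hor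
    have hcut := H.cutD hB hn hne
    rw [cw_sub, cw_ed _ _ _ _ hwS hy]
    simp only [sum_add_distrib, sum_sub_distrib, sum_dl]
    have e2 : D S μ c B = cw S μ B + ∑ i ∈ B, c i := rfl
    have e3 : b q r B = ∑ i ∈ B, r i + ∑ i ∈ B, q i := by unfold b; rw [sum_add_distrib]
    rcases hor with hAB | hdis
    · have g1 : w ∈ B := hAB hw
      have g0 : w0 ∈ B := hAB hw0
      by_cases g2 : y ∈ B <;> simp only [g1, g2, g0, true_and, not_true, not_false_eq_true, if_true, if_false, false_and, and_false, sub_add_cancel, add_sub_cancel_right, add_zero, sub_zero]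
      · rw [e3] at hcut; omega
      · have := H.P1 hB hne (hA2.trans (card_le_card hAB))
        rw [a6_congr (y := b q r B)] <;> omega
    · have g1 : w ∉ B := fun h => disjoint_left.1 hdis hw h
      have g0 : w0 ∉ B := fun h => disjoint_left.1 hdis hw0 h
      by_cases g2 : y ∈ B <;> simp only [g1, g2, g0, true_and, not_true, not_false_eq_true, if_true, if_false, false_and, and_false, sub_add_cancel, add_sub_cancel_right, add_zero, sub_zero]
      · rw [a6_congr (y := b q r B)] <;> omega
      · rw [e3] at hcut; omega)
  refine ⟨fun i j => f0 i j + ar w y i j, ⟨?_, ?_, ?_⟩, ?_⟩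
  · intro i j; beta_reduce; rw [fa i j, ar_anti w y i j]; ring
  · intro i hi j hj hij hn
    have := fb i hi j hj hij hn
    simp only [abs_le] at *
    unfold ed at this; unfold ar
    split_ifs at * <;> omega
  · intro i hi
    have := fn i hi
    simp only [sum_add_distrib]
    rw [sum_ar S hwS hy]
    omega
  · have := (fb w hwS y hy hwy (fun h => hyA h.2)).1
    rw [abs_le] at this
    simp only [ed, ar] at *
    simp [hwy] at *
    omega

lemma outer_xy {S : Finset V} {μ : V → V → ℤ} {c q r : V → ℤ} (H : Pos S μ c q r) {A : Finset V}
    (hA : A ⊆ S) (hA2 : 2 ≤ A.card) {w1 w2 x y : V} (hw1 : w1 ∈ A) (hw2 : w2 ∈ A)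
    (hx : x ∈ S) (hxA : x ∉ A) (hy : y ∈ S) (hyA : y ∉ A) (hxy : x ≠ y)
    (hm1 : 1 ≤ μ w1 x) (hm2 : 1 ≤ μ w2 y) :
    ∃ f, Part S A μ r f ∧ ((- μ w2 y + 2 ≤ f w2 y ∧ f w1 x ≤ μ w1 x - 2) ∨
      (- μ w1 x + 2 ≤ f w1 x ∧ f w2 y ≤ μ w2 y - 2)) := by
  have h1x : w1 ≠ x := by rintro rfl; exact hxA hw1
  have h1y : w1 ≠ y := by rintro rfl; exact hyA hw1
  have h2x : w2 ≠ x := by rintro rfl; exact hxA hw2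
  have h2y : w2 ≠ y := by rintro rfl; exact hyA hw2
  have hw1S := hA hw1
  have hw2S := hA hw2
  have nn1 := del_nn H.sym H.nn h1x hm1
  have nn2 := del_nn (μ := fun i j => μ i j - ed w1 x i j)
    (fun i j => by beta_reduce; rw [H.sym i j, ed_sym w1 x i j]) nn1 h2y (by
      simp only [ed]; simp [h2x, hxy, Ne.symm hxy]; exact hm2)
  have ednn : ∀ i j, 0 ≤ ed x y i j := by intro i j; unfold ed; split_ifs <;> norm_num
  have cwe : ∀ B, cw S (fun i j => μ i j - ed w1 x i j - ed w2 y i j + ed x y i j) B =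
      cw S μ B - cw S (ed w1 x) B - cw S (ed w2 y) B + cw S (ed x y) B := by
    intro B
    rw [cw_add S (fun i j => μ i j - ed w1 x i j - ed w2 y i j), cw_sub S (fun i j => μ i j - ed w1 x i j), cw_sub]
  have B : Basic S (fun i j => μ i j - ed w1 x i j - ed w2 y i j + ed x y i j) c q
      (fun i => r i - dl w1 i + dl w2 i) := by
    refine ⟨?_, ?_, H.qc, H.qp, ?_, ?_, H.z⟩
    · intro i j; beta_reduce; rw [H.sym i j, ed_sym w1 x i j, ed_sym w2 y i j, ed_sym x y i j]
    · intro i j; have := nn2 i j; have := ednn i j; omega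
    · intro i hi
      have := H.par i hi
      rw [cwe, cw_ed _ _ _ _ hw1S hx, cw_ed _ _ _ _ hw2S hy, cw_ed _ _ _ _ hx hy]
      simp only [mem_singleton, dl]
      by_cases e1 : i = x
      · subst e1; simp [Ne.symm h1x, h1x, Ne.symm h2x, h2x, hxy, Ne.symm hxy]; omega
      · by_cases e2 : i = y
        · subst e2; simp [Ne.symm h1y, h1y, Ne.symm h2y, h2y, hxy, Ne.symm hxy]; omega
        · by_cases e3 : i = w1 <;> by_cases e4 : i = w2
          · subst e3; subst e4; simp [Ne.symm e1, Ne.symm e2]; omega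
          · subst e3; simp [Ne.symm e1, Ne.symm e2, e4, Ne.symm e4]; omega
          · subst e4; simp [Ne.symm e1, Ne.symm e2, e3, Ne.symm e3]; omega
          · simp [Ne.symm e1, Ne.symm e2, e3, Ne.symm e3, e4, Ne.symm e4]; omega
    · have := H.tot
      simp only [sum_add_distrib, sum_sub_distrib, sum_dl, hw1S, hw2S, if_true]
      omega
  obtain ⟨f0, fa, fb, fn⟩ := outer B H.ih1 hA hA2 (by
    intro B hB hn hne hor
    have hcut := H.cutD hB hn hne
    rw [cwe, cw_ed _ _ _ _ hw1S hx, cw_ed _ _ _ _ hw2S hy, cw_ed _ _ _ _ hx hy]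
    simp only [sum_add_distrib, sum_sub_distrib, sum_dl]
    have e2 : D S μ c B = cw S μ B + ∑ i ∈ B, c i := rfl
    have e3 : b q r B = ∑ i ∈ B, r i + ∑ i ∈ B, q i := by unfold b; rw [sum_add_distrib]
    rw [e3] at hcut
    rcases hor with hAB | hdis
    · have g1 : w1 ∈ B := hAB hw1
      have g2 : w2 ∈ B := hAB hw2
      have hP := H.P1 hB hne (hA2.trans (card_le_card hAB))
      rw [e3] at hP
      by_cases g3 : x ∈ B <;> by_cases g4 : y ∈ B <;> simp only [g1, g2, g3, g4, true_and, not_true, not_false_eq_true, if_true, if_false, false_and, and_false, sub_add_cancel, add_sub_cancel_right, add_zero, sub_zero] <;> omega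
    · have g1 : w1 ∉ B := fun h => disjoint_left.1 hdis hw1 h
      have g2 : w2 ∉ B := fun h => disjoint_left.1 hdis hw2 h
      by_cases g3 : x ∈ B <;> by_cases g4 : y ∈ B <;> simp only [g1, g2, g3, g4, true_and, not_true, not_false_eq_true, if_true, if_false, false_and, and_false, sub_add_cancel, add_sub_cancel_right, add_zero, sub_zero]
      · have hP := H.P1 hB hne (two_le g3 (by rintro rfl; exact hxy (mem_singleton.1 g4).symm))
        rw [e3] at hP
        omega
      all_goals omega)
  have : ∃ s : ℤ, (s = 1 ∨ s = -1) ∧ |f0 x y - s| ≤ μ x y := by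
    have := fb x hx y hy hxy (fun h => hxA h.1)
    have h0 := H.nn x y
    simp only [ed, abs_le] at this
    simp [hxy, Ne.symm h1x, Ne.symm h2x, Ne.symm h1y, Ne.symm hxy] at this
    by_cases h1 : 0 < f0 x y
    · refine ⟨1, Or.inl rfl, ?_⟩; rw [abs_le]; omega
    · refine ⟨-1, Or.inr rfl, ?_⟩; rw [abs_le]; omega
  obtain ⟨s, hs, hs2⟩ := this
  refine ⟨fun i j => f0 i j + s * (ar x w1 i j + ar w2 y i j + ar y x i j), ⟨?_, ?_, ?_⟩, ?_⟩
  · intro i j; beta_reduce; rw [fa i j, ar_anti x w1 i j, ar_anti w2 y i j, ar_anti y x i j]; ring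
  · intro i hi j hj hij hn
    have h1 := fb i hi j hj hij hn
    have h4 := fa x y
    have h0 := H.nn i j
    by_cases e1 : i = x ∧ j = y
    · obtain ⟨rfl, rfl⟩ := e1
      simp only [ed, ar, abs_le] at *
      simp [hxy, h1x, h1y, h2x, h2y, Ne.symm hxy, Ne.symm h1x, Ne.symm h2x] at h1 hs2 ⊢
      rcases hs with rfl | rfl <;> omega
    by_cases e2 : i = y ∧ j = x
    · obtain ⟨rfl, rfl⟩ := e2
      have hsy := H.sym i j
      simp only [ed, ar, abs_le] at *
      simp [hxy, h1x, h1y, h2x, h2y, Ne.symm hxy, Ne.symm h1x, Ne.symm h2x, Ne.symm h1y, Ne.symm h2y] at h1 hs2 ⊢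
      rcases hs with rfl | rfl <;> omega
    clear h4 hs2 fa fb nn1 nn2 B cwe ednn fn
    unfold ed at h1; unfold ar
    have e1' : ¬ (j = y ∧ i = x) := fun h => e1 ⟨h.2, h.1⟩
    have e2' : ¬ (j = x ∧ i = y) := fun h => e2 ⟨h.2, h.1⟩
    simp only [abs_le, e1, e2, if_false] at *
    have g1 : i = x ∧ j = w1 → ¬ (i = w1 ∧ j = x) := by rintro ⟨rfl, rfl⟩ ⟨h, _⟩; exact h1x h.symm
    have g2 : i = y ∧ j = w2 → ¬ (i = w2 ∧ j = y) := by rintro ⟨rfl, rfl⟩ ⟨h, _⟩; exact h2y h.symm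
    have g3 : i = x ∧ j = w1 → ¬ (i = w2 ∧ j = y) := by rintro ⟨rfl, rfl⟩ ⟨_, h⟩; exact h1y h
    have g4 : i = y ∧ j = w2 → ¬ (i = w1 ∧ j = x) := by rintro ⟨rfl, rfl⟩ ⟨_, h⟩; exact h2x h
    have g5 : i = x ∧ j = w1 → ¬ (i = y ∧ j = w2) := by rintro ⟨rfl, rfl⟩ ⟨h, _⟩; exact hxy h
    have g6 : i = w1 ∧ j = x → ¬ (i = w2 ∧ j = y) := by rintro ⟨rfl, rfl⟩ ⟨_, h⟩; exact hxy h
    rcases hs with rfl | rfl <;> (split_ifs at * <;> first | omega | (exfalso; tauto))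
  · intro i hi
    have := fn i hi
    have hiA := (mem_sdiff.1 hi).2
    have d1 : dl w1 i = 0 := by simp only [dl]; rw [if_neg]; rintro rfl; exact hiA hw1
    have d2 : dl w2 i = 0 := by simp only [dl]; rw [if_neg]; rintro rfl; exact hiA hw2
    rw [sum_add_distrib, ← mul_sum, sum_add_distrib, sum_add_distrib, sum_ar S hx hw1S, sum_ar S hw2S hy, sum_ar S hy hx]
    rw [d1, d2]
    rw [show dl x i - 0 + (0 - dl y i) + (dl y i - dl x i) = 0 by ring, mul_zero, add_zero]
    rw [d1, d2] at this; simpa using this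
  · have k1 := (fb w1 hw1S x hx h1x (fun h => hxA h.2)).1
    have k2 := (fb w2 hw2S y hy h2y (fun h => hyA h.2)).1
    rw [abs_le] at k1 k2
    simp only [ed, ar] at *
    simp [h1x, h2y, h1y, h2x, hxy, Ne.symm hxy] at k1 k2 ⊢
    rcases hs with rfl | rfl <;> omega

lemma Pos.P1' {S : Finset V} {μ : V → V → ℤ} {c q r : V → ℤ} (H : Pos S μ c q r) {A : Finset V}
    (hA : A ⊆ S) (hne : A ≠ S) (hA2 : 2 ≤ A.card)
    (hh : (b q r A % 6 = 0 ∧ D S μ c A = 6) ∨ (b q r A % 6 = 5 ∧ D S μ c A = 7)) : False := by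
  have hAn : A.Nonempty := card_pos.1 (by omega)
  have hDA : D S μ c A = cw S μ A + ∑ i ∈ A, c i := rfl
  have hcS := H.csum.2
  have hcA : ∑ i ∈ A, c i ≤ ∑ i ∈ S, c i := sum_le_sum_of_subset_of_nonneg hA (fun i hi _ => H.c0 i hi)
  have pickA : ∀ T ⊆ S, (1 ≤ ∑ i ∈ A, ∑ j ∈ T, μ i j) → ∃ w ∈ A, ∃ y ∈ T, 1 ≤ μ w y := by
    intro T hT h
    obtain ⟨w, hw, h1⟩ := pick (T := A) _ h
    obtain ⟨y, hy, h2⟩ := pick (T := T) _ h1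
    exact ⟨w, hw, y, hy, h2⟩
  have main : ∃ f w y, w ∈ A ∧ y ∈ S \ A ∧ Part S A μ r f ∧ - μ w y + 2 ≤ f w y := by
    obtain ⟨w, hw, y, hy, hm⟩ := pickA (S \ A) sdiff_subset (by unfold cw at hDA; omega)
    have hy' := mem_sdiff.1 hy
    by_cases hc : 1 ≤ ∑ i ∈ A, c i
    · obtain ⟨w0, hw0, h0⟩ := pick (T := A) _ hc
      obtain ⟨f, hf, hf2⟩ := outer_z H hA hA2 hw0 hw hy'.1 hy'.2 h0 hm
      exact ⟨f, w, y, hw, hy, hf, hf2⟩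
    · by_cases hx : 1 ≤ ∑ i ∈ A, ∑ j ∈ (S \ A) \ {y}, μ i j
      · obtain ⟨w1, hw1, x, hx, hm1⟩ := pickA ((S \ A) \ {y}) (sdiff_subset.trans sdiff_subset) hx
        simp only [mem_sdiff, mem_singleton] at hx
        obtain ⟨f, hf, hf2⟩ := outer_xy H hA hA2 hw1 hw hx.1.1 hx.1.2 hy'.1 hy'.2 hx.2 hm1 hm
        rcases hf2 with h | h
        · exact ⟨f, w, y, hw, hy, hf, h.1⟩
        · exact ⟨f, w1, x, hw1, mem_sdiff.2 hx.1, hf, h.1⟩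
      · exfalso
        have hc0 : 0 ≤ ∑ i ∈ A, c i := sum_nonneg fun i hi => H.c0 i (hA hi)
        have hx0 : 0 ≤ ∑ i ∈ A, ∑ j ∈ (S \ A) \ {y}, μ i j := sum_nonneg fun i _ => sum_nonneg fun j _ => H.nn _ _
        have e : cw S μ A = ∑ i ∈ A, μ y i := by
          unfold cw
          have : ∀ i, ∑ j ∈ S \ A, μ i j = ∑ j ∈ (S \ A) \ {y}, μ i j + μ i y := by
            intro i
            rw [← sum_sdiff (singleton_subset_iff.2 hy), sum_singleton]
          simp only [this, sum_add_distrib]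
          have : ∑ i ∈ A, μ i y = ∑ i ∈ A, μ y i := sum_congr rfl fun i _ => H.sym _ _
          omega
        have hi := D_insert (c := c) H.sym hA hy'.1 hy'.2
        have ty := H.t y hy'.1
        unfold tp at ty
        have hle : D S μ c (insert y A) ≤ 0 := by omega
        by_cases hS : insert y A = S
        · rw [hS] at hle
          unfold D at hle
          have := cw_nonneg (S := S) H.nn S
          obtain ⟨v, hv, hcv⟩ := H.exc
          have := single_le_sum (f := c) (fun i hi => H.c0 i hi) hv
          omega
        · have := H.cutD (insert_subset hy'.1 hA) (insert_nonempty _ _) hS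
          have : 0 ≤ a6 (b q r (insert y A)) := by unfold a6; omega
          omega
  obtain ⟨f, w, y, hw, hy, hf, hf2⟩ := main
  have hy' := mem_sdiff.1 hy
  refine H.ns (inner_k H.toBasic H.ih1 hA hne f hf.fa hf.fb hf.fn (dl w) ?_ ?_ ?_)
  · intro i hi
    have hstd := std_bound H.toBasic hA f hf.fb i hi
    by_cases e : i = w
    · subst e
      have h1 := H.qc i (hA hi)
      have h2 : - (∑ j ∈ S \ A, μ i j) + 2 ≤ ∑ j ∈ S \ A, f i j := by
        have : ∑ j ∈ (S \ A) \ {y}, (- μ i j) ≤ ∑ j ∈ (S \ A) \ {y}, f i j := by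
          refine sum_le_sum fun j hj => ?_
          have hj' := mem_sdiff.1 (mem_sdiff.1 hj).1
          have hij : i ≠ j := by rintro rfl; exact hj'.2 hi
          exact (abs_le.1 (hf.fb i (hA hi) j hj'.1 hij (fun h => hj'.2 h.2)).1).1
        rw [sum_neg_distrib] at this
        rw [← sum_sdiff (singleton_subset_iff.2 hy), ← sum_sdiff (singleton_subset_iff.2 hy), sum_singleton, sum_singleton]
        omega
      simp only [dl, if_true]
      rw [abs_le] at *
      omega
    · simp only [dl, e, if_false, sub_zero]; exact hstd
  · rw [sum_dl, if_pos hw]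
    unfold a6; omega
  · intro B hB hBn hBA
    rw [sum_dl]
    have hBS := hB.trans hA
    have hBne : B ≠ S := fun h => hne (Subset.antisymm hA (h ▸ hB))
    have h1 := H.cutD hBS hBn hBne
    by_cases hwB : w ∈ B
    · rw [if_pos hwB]
      by_cases hB1 : B = {w}
      · have := H.t w (hA hw)
        unfold tp at this
        rw [hB1]; unfold a6; omega
      · have := H.P1 hBS hBne (two_le hwB hB1)
        unfold a6 at *; omega
    · rw [if_neg hwB, sub_zero, sub_zero]; exact h1

end LT

open Finset
namespace LT
variable {V : Type} [DecidableEq V]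

lemma outer_v {S : Finset V} {μ : V → V → ℤ} {c q r : V → ℤ} (H : Pos S μ c q r) {A : Finset V}
    (hA : A ⊆ S) (hA2 : 2 ≤ A.card) {w y : V} (hw : w ∈ A) (hy : y ∈ S) (hyA : y ∉ A)
    (hm : 1 ≤ μ w y) :
    ∃ f, Part S A μ r f ∧ f w y ≤ μ w y - 2 := by
  have hwy : w ≠ y := by rintro rfl; exact hyA hw
  have hwS := hA hw
  have nn' := del_nn H.sym H.nn hwy hm
  have B : Basic S (fun i j => μ i j - ed w y i j) c q (fun i => r i + dl w i - dl y i) := by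
    refine ⟨?_, nn', H.qc, H.qp, ?_, ?_, H.z⟩
    · intro i j; beta_reduce; rw [H.sym i j, ed_sym w y i j]
    · intro i hi
      have := H.par i hi
      rw [cw_sub, cw_ed _ _ _ _ hwS hy]
      simp only [mem_singleton, dl]
      by_cases e1 : i = w
      · subst e1; simp [Ne.symm hwy, hwy]; omega
      · by_cases e2 : i = y
        · subst e2; simp [Ne.symm hwy, hwy]; omega
        · simp [e1, e2, Ne.symm e1, Ne.symm e2]; omega
    · have := H.tot
      simp only [sum_add_distrib, sum_sub_distrib, sum_dl, hwS, hy, if_true]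
      omega
  obtain ⟨f0, fa, fb, fn⟩ := outer B H.ih1 hA hA2 (by
    intro B hB hn hne hor
    have hcut := H.cutD hB hn hne
    rw [cw_sub, cw_ed _ _ _ _ hwS hy]
    simp only [sum_add_distrib, sum_sub_distrib, sum_dl]
    have e2 : D S μ c B = cw S μ B + ∑ i ∈ B, c i := rfl
    have e3 : b q r B = ∑ i ∈ B, r i + ∑ i ∈ B, q i := by unfold b; rw [sum_add_distrib]
    rcases hor with hAB | hdis
    · have g1 : w ∈ B := hAB hw
      by_cases g2 : y ∈ B <;> simp only [g1, g2, true_and, not_true, not_false_eq_true, if_true, if_false, false_and, and_false, sub_add_cancel, add_sub_cancel_right, add_zero, sub_zero]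
      · rw [e3] at hcut; omega
      · have := H.P1 hB hne (hA2.trans (card_le_card hAB))
        rw [a6_congr (y := b q r B + 1)] <;> [skip; omega]
        have : a6 (b q r B + 1) ≤ a6 (b q r B) + 1 := by unfold a6; omega
        omega
    · have g1 : w ∉ B := fun h => disjoint_left.1 hdis hw h
      by_cases g2 : y ∈ B <;> simp only [g1, g2, true_and, not_true, not_false_eq_true, if_true, if_false, false_and, and_false, sub_add_cancel, add_sub_cancel_right, add_zero, sub_zero, zero_add]
      · rw [a6_congr (y := b q r B - 1)] <;> [skip; omega]
        by_cases hB1 : B = {y}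
        · have := H.t y hy
          unfold tp at this
          rw [← hB1] at this
          unfold a6; omega
        · have := H.P1 hB hne (two_le g2 hB1)
          have : a6 (b q r B - 1) ≤ a6 (b q r B) + 1 := by unfold a6; omega
          omega
      · rw [e3] at hcut; omega)
  refine ⟨fun i j => f0 i j + ar y w i j, ⟨?_, ?_, ?_⟩, ?_⟩
  · intro i j; beta_reduce; rw [fa i j, ar_anti y w i j]; ring
  · intro i hi j hj hij hn
    have := fb i hi j hj hij hn
    simp only [abs_le] at *
    unfold ed at this; unfold ar
    split_ifs at * <;> omega
  · intro i hi
    have := fn i hi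
    simp only [sum_add_distrib]
    rw [sum_ar S hy hwS]
    omega
  · have := (fb w hwS y hy hwy (fun h => hyA h.2)).1
    rw [abs_le] at this
    simp only [ed, ar] at *
    simp [hwy] at *
    omega

lemma Pos.bad {S : Finset V} {μ : V → V → ℤ} {c q r : V → ℤ} (H : Pos S μ c q r) {A : Finset V} {v : V}
    (hv : v ∈ S) (hA : A ⊆ S \ {v}) {f : V → V → ℤ} (F : Part S (insert v A) μ r f)
    (hb : b q r A % 6 = 0) (hD : D S μ c A = 8) (he : ∑ j ∈ A, μ v j = 3)
    (hf : (6:ℤ) ∣ (∑ j ∈ S \ insert v A, f v j) - 3 - r v)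
    (hB : ∀ B ⊆ A, B.Nonempty → B ≠ A → 4 + a6 (b q r B - ∑ j ∈ B, μ v j) ≤ D S μ c B - ∑ j ∈ B, μ v j) :
    False := by
  have hAS : A ⊆ S := hA.trans sdiff_subset
  have hvA : v ∉ A := fun h => (mem_sdiff.1 (hA h)).2 (mem_singleton_self v)
  have hne : A ≠ S := fun h => hvA (h ▸ hv)
  have hsd : S \ A = insert v (S \ insert v A) := by
    ext i; simp only [mem_sdiff, mem_insert]
    by_cases h : i = v
    · subst h; simp [hv, hvA]
    · simp [h]
  have hvn : v ∉ S \ insert v A := by simp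
  have fvv : f v v = 0 := by have := F.fa v v; omega
  refine H.ns (inner_k H.toBasic H.ih1 hAS hne
    (fun i j => if i = v ∧ j ∈ A then - μ v j else if j = v ∧ i ∈ A then μ v i else f i j) ?_ ?_ ?_ (μ v) ?_ ?_ hB)
  · intro i j
    by_cases h1 : i = v ∧ j ∈ A
    · obtain ⟨rfl, h1⟩ := h1; simp [h1, hvA]
    · by_cases h2 : j = v ∧ i ∈ A
      · obtain ⟨rfl, h2⟩ := h2; simp [h2, hvA]
      · simp only [h1, h2, if_false]; exact F.fa i j
  · intro i hi j hj hij hn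
    by_cases h1 : i = v ∧ j ∈ A
    · obtain ⟨rfl, h1⟩ := h1
      simp only [h1, and_self, if_true, abs_neg]
      have := H.nn i j
      rw [abs_of_nonneg this]; omega
    · by_cases h2 : j = v ∧ i ∈ A
      · obtain ⟨rfl, h2⟩ := h2
        have := H.nn j i
        have hs := H.sym i j
        simp only [h1, h2, and_self, if_true, if_false]
        rw [abs_of_nonneg this]; omega
      · simp only [h1, h2, if_false]
        refine F.fb i hi j hj hij ?_
        simp only [mem_insert]
        rintro ⟨h3, h4⟩
        rcases h3 with h3 | h3 <;> rcases h4 with h4 | h4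
        · exact hij (h3.trans h4.symm)
        · exact h1 ⟨h3, h4⟩
        · exact h2 ⟨h4, h3⟩
        · exact hn ⟨h3, h4⟩
  · intro i hi
    obtain ⟨hiS, hiA⟩ := mem_sdiff.1 hi
    by_cases h : i = v
    · subst h
      rw [← sum_sdiff hAS, hsd, sum_insert hvn]
      have e1 : ∑ j ∈ S \ insert i A, (if i = i ∧ j ∈ A then - μ i j else if j = i ∧ i ∈ A then μ i i else f i j)
          = ∑ j ∈ S \ insert i A, f i j := by
        refine sum_congr rfl fun j hj => ?_
        simp only [mem_sdiff, mem_insert, not_or] at hj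
        simp [hj.2]
      have e2 : ∑ j ∈ A, (if i = i ∧ j ∈ A then - μ i j else if j = i ∧ i ∈ A then μ i i else f i j)
          = - ∑ j ∈ A, μ i j := by
        rw [← sum_neg_distrib]
        refine sum_congr rfl fun j hj => ?_
        simp [hj]
      rw [e1, e2]
      simp only [hvA, and_false, if_false, fvv]
      omega
    · simp only [h, hiA, false_and, and_false, if_false]
      exact F.fn i (by simp [hiS, hiA, h])
  · intro i hi
    have hiv : i ≠ v := fun h => hvA (h ▸ hi)
    rw [hsd, sum_insert hvn, sum_insert hvn]
    have e1 : ∑ j ∈ S \ insert v A, (if i = v ∧ j ∈ A then - μ v j else if j = v ∧ i ∈ A then μ v i else f i j)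
        = ∑ j ∈ S \ insert v A, f i j := by
      refine sum_congr rfl fun j hj => ?_
      simp only [mem_sdiff, mem_insert, not_or] at hj
      simp [hj.2, hiv]
    rw [e1]
    simp only [hiv, hi, and_true, if_true, false_and, if_false]
    have h1 := std_bound H.toBasic (insert_subset hv hAS) f F.fb i (mem_insert_of_mem hi)
    have hs := H.sym i v
    rw [abs_le] at *
    omega
  · rw [hD, he]; unfold a6; omega

lemma Pos.getf {S : Finset V} {μ : V → V → ℤ} {c q r : V → ℤ} (H : Pos S μ c q r) {A : Finset V} {v x : V} {t : ℤ}
    (hv : v ∈ S) (hc : 1 ≤ c v) (hA : A ⊆ S \ {v}) (hAn : A.Nonempty)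
    (ht : (t = 1 ∧ b q r {v} % 6 = 1 ∧ D S μ c {v} = 5) ∨ (t = 2 ∧ b q r {v} % 6 = 2 ∧ D S μ c {v} = 6))
    (hx : t = 2 → x ∈ S ∧ x ≠ v ∧ 1 ≤ μ v x ∧ (c v = 1 → μ v x = 1) ∧ x ∉ A)
    (he : ∑ j ∈ A, μ v j = 3) :
    ∃ f, Part S (insert v A) μ r f ∧ (6:ℤ) ∣ (∑ j ∈ S \ insert v A, f v j) - 3 - r v := by
  have hAS : A ⊆ S := hA.trans sdiff_subset
  have hvA : v ∉ A := fun h => (mem_sdiff.1 (hA h)).2 (mem_singleton_self v)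
  have hC : insert v A ⊆ S := insert_subset hv hAS
  have hC2 : 2 ≤ (insert v A).card := by rw [card_insert_of_notMem hvA]; have := card_pos.2 hAn; omega
  have hvC : v ∈ insert v A := mem_insert_self _ _
  have c2 := H.c2 v hv
  have hq := H.qe v hv
  have hbv : b q r {v} = r v + q v := by simp [b]
  have hsd : (S \ {v}) \ A = S \ insert v A := by
    ext i; simp only [mem_sdiff, mem_insert, mem_singleton]; tauto
  have hDv : D S μ c {v} = ∑ j ∈ S \ insert v A, μ v j + 3 + c v := by
    unfold D; rw [cw_single, sum_singleton, ← sum_sdiff hA, hsd, he]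
  have zero : ∀ f, Part S (insert v A) μ r f → ∀ T ⊆ S \ insert v A, ∑ j ∈ T, μ v j = 0 → ∑ j ∈ T, f v j = 0 := by
    intro f F T hT h0
    refine sum_eq_zero fun j hj => ?_
    have h1 := zero_of_sum (H.nn v) h0 j hj
    have hj' := mem_sdiff.1 (hT hj)
    have hvj : v ≠ j := by rintro rfl; exact hj'.2 hvC
    have := (F.fb v hv j hj'.1 hvj (fun h => hj'.2 h.2)).1
    rw [abs_le] at this; omega
  have split : ∀ y ∈ S \ insert v A, ∀ g : V → ℤ, ∑ j ∈ S \ insert v A, g j = ∑ j ∈ (S \ insert v A) \ {y}, g j + g y := by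
    intro y hy g
    rw [← sum_sdiff (singleton_subset_iff.2 hy), sum_singleton]
  have nnT : ∀ T : Finset V, 0 ≤ ∑ j ∈ T, μ v j := fun T => sum_nonneg fun j _ => H.nn v j
  have bd : ∀ f, Part S (insert v A) μ r f → ∀ y ∈ S \ insert v A, |f v y| ≤ μ v y := by
    intro f F y hy
    have hj' := mem_sdiff.1 hy
    have hvj : v ≠ y := by rintro rfl; exact hj'.2 hvC
    exact (F.fb v hv y hj'.1 hvj (fun h => hj'.2 h.2)).1
  rcases ht with ⟨rfl, h1, h2⟩ | ⟨rfl, h1, h2⟩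
  · by_cases hc1 : c v = 1
    · obtain ⟨y, hy, hm⟩ := pick (T := S \ insert v A) (μ v) (by omega)
      have hy' := mem_sdiff.1 hy
      obtain ⟨f, F, hf⟩ := outer_v H hC hC2 hvC hy'.1 hy'.2 hm
      refine ⟨f, F, ?_⟩
      have s1 := split y hy (μ v)
      have n1 := nnT ((S \ insert v A) \ {y})
      have := bd f F y hy
      rw [abs_le] at this
      rw [split y hy, zero f F _ sdiff_subset (by omega)]
      omega
    · obtain ⟨f, fa, fb, fn⟩ := outer H.toBasic H.ih1 hC hC2 (fun B hB hn hne _ => H.cut B hB hn hne)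
      have F : Part S (insert v A) μ r f := ⟨fa, fb, fn⟩
      refine ⟨f, F, ?_⟩
      rw [zero f F _ (Subset.refl _) (by omega)]
      omega
  · obtain ⟨hxS, hxv, hmx, hx1, hxA⟩ := hx rfl
    have hxC : x ∉ insert v A := by simp [hxv, hxA]
    have hxT : x ∈ S \ insert v A := mem_sdiff.2 ⟨hxS, hxC⟩
    have s1 := split x hxT (μ v)
    have n1 := nnT ((S \ insert v A) \ {x})
    by_cases hc1 : c v = 1
    · have hx1 := hx1 hc1
      obtain ⟨y, hy, hm⟩ := pick (T := (S \ insert v A) \ {x}) (μ v) (by omega)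
      have hyT := (mem_sdiff.1 hy).1
      have hyx : y ≠ x := by simpa using (mem_sdiff.1 hy).2
      have hy' := mem_sdiff.1 hyT
      obtain ⟨f, F, hf⟩ := outer_xy H hC hC2 hvC hvC hxS hxC hy'.1 hy'.2 (Ne.symm hyx) hmx hm
      refine ⟨f, F, ?_⟩
      have b1 := bd f F y hyT
      have b2 := bd f F x hxT
      have s2 : ∀ g : V → ℤ, ∑ j ∈ (S \ insert v A) \ {x}, g j = ∑ j ∈ ((S \ insert v A) \ {x}) \ {y}, g j + g y := by
        intro g
        rw [← sum_sdiff (singleton_subset_iff.2 hy), sum_singleton]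
      have s3 := s2 (μ v)
      have n2 := nnT (((S \ insert v A) \ {x}) \ {y})
      rw [abs_le] at b1 b2
      rw [split x hxT, s2, zero f F _ (sdiff_subset.trans sdiff_subset) (by omega)]
      omega
    · obtain ⟨f, F, hf⟩ := outer_z H hC hC2 hvC hvC hxS hxC hc hmx
      refine ⟨f, F, ?_⟩
      have b2 := bd f F x hxT
      rw [abs_le] at b2
      rw [split x hxT, zero f F _ sdiff_subset (by omega)]
      omega

end LT

open Finset
namespace LT
variable {V : Type} [DecidableEq V]

lemma a6_table : a6 (-5) = 1 ∧ a6 (-4) = 2 ∧ a6 (-3) = 3 ∧ a6 (-2) = 2 ∧ a6 (-1) = 1 ∧ a6 0 = 0 ∧ a6 1 = 1 ∧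
    a6 2 = 2 ∧ a6 3 = 3 ∧ a6 4 = 2 ∧ a6 5 = 1 ∧ a6 6 = 0 ∧ a6 7 = 1 := by decide

set_option maxHeartbeats 4000000 in
lemma num {t cv e ex bb d : ℤ} (hc1 : 1 ≤ cv) (hc2 : cv ≤ 2) (he0 : 0 ≤ e) (he : e ≤ 4 + t - cv)
    (hx : (t = 1 ∧ ex = 0) ∨ (t = 2 ∧ ((ex = 0 ∧ e ≤ 3 + t - cv) ∨ (ex = 1 ∧ 1 ≤ e))))
    (hp : (2:ℤ) ∣ d - bb) (h1 : 6 + a6 bb ≤ d) (h2 : 6 + a6 (bb + t) ≤ d + (4 + t) - 2 * e)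
    (h3 : ¬ ((bb % 6 = 0 ∧ d = 6) ∨ (bb % 6 = 5 ∧ d = 7)))
    (h4 : ¬ (((bb + t) % 6 = 0 ∧ d + (4 + t) - 2 * e = 6) ∨ ((bb + t) % 6 = 5 ∧ d + (4 + t) - 2 * e = 7))) :
    4 + a6 (bb - (e - ex)) ≤ d - (e - ex) ∨ (e = 3 ∧ ex = 0 ∧ bb % 6 = 0 ∧ d = 8) := by
  have hm0 : 0 ≤ bb % 6 := Int.emod_nonneg _ (by norm_num)
  have hm6 : bb % 6 < 6 := Int.emod_lt_of_pos _ (by norm_num)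
  rw [a6_congr (y := bb % 6) (by omega)] at h1
  rw [a6_congr (y := bb % 6 + t) (by omega)] at h2
  rw [a6_congr (y := bb % 6 - (e - ex)) (by omega)]
  have hp' : (2:ℤ) ∣ d - bb % 6 := by omega
  rw [show (bb + t) % 6 = (bb % 6 + t) % 6 by omega] at h4
  clear hp
  generalize bb % 6 = m at *
  have he5 : e ≤ 5 := by omega
  obtain ⟨k0, k1, k2, k3, k4, k5, k6, k7, k8, k9, k10, k11, k12⟩ := a6_table
  rcases hx with ⟨rfl, rfl⟩ | ⟨rfl, ⟨rfl, h⟩ | ⟨rfl, h⟩⟩ <;>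
  interval_cases m <;> norm_num at h1 h2 h3 h4 <;>
  simp only [k0, k1, k2, k3, k4, k5, k6, k7, k8, k9, k10, k11, k12] at h1 h2  <;>
  interval_cases e <;> norm_num <;> simp only [k0, k1, k2, k3, k4, k5, k6, k7, k8, k9, k10, k11, k12] <;> omega

set_option maxHeartbeats 4000000 in
lemma Pos.fls {S : Finset V} {μ : V → V → ℤ} {c q r : V → ℤ} (H : Pos S μ c q r) : False := by
  obtain ⟨v, hv, hc⟩ := H.exc
  have c2 := H.c2 v hv
  have hq := H.qe v hv
  have hbv : b q r {v} = r v + q v := by simp [b]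
  have hDv : D S μ c {v} = ∑ j ∈ S \ {v}, μ v j + c v := by
    unfold D; rw [cw_single, sum_singleton]
  obtain ⟨t, ht⟩ : ∃ t : ℤ, (t = 1 ∧ b q r {v} % 6 = 1 ∧ D S μ c {v} = 5) ∨ (t = 2 ∧ b q r {v} % 6 = 2 ∧ D S μ c {v} = 6) := by
    rcases H.t v hv with h | h
    · exact ⟨1, Or.inl ⟨rfl, h⟩⟩
    · exact ⟨2, Or.inr ⟨rfl, h⟩⟩
  have hm : ∀ w ∈ S \ {v}, 4 + μ v w ≤ D S μ c {v} ∧ 4 + μ v w ≤ D S μ c {w} := by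
    intro w hw
    have hw' := mem_sdiff.1 hw
    have hne : v ≠ w := by rintro rfl; exact hw'.2 (mem_singleton_self _)
    refine ⟨H.mult hv hw'.1 hne, ?_⟩
    rw [H.sym v w]; exact H.mult hw'.1 hv (Ne.symm hne)
  obtain ⟨x, hx⟩ : ∃ x, t = 2 → x ∈ S ∧ x ≠ v ∧ 1 ≤ μ v x ∧ (c v = 1 → μ v x = 1) := by
    by_cases h2 : t = 2
    · by_cases h1 : c v = 1
      · by_contra hcon
        push Not at hcon
        have : (2:ℤ) ∣ ∑ j ∈ S \ {v}, μ v j := by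
          refine dvd_sum fun j hj => ?_
          have hj' := mem_sdiff.1 hj
          have hjv : j ≠ v := by simpa using hj'.2
          have a1 := hm j hj
          have a2 := hcon j
          have a3 := H.nn v j
          by_contra hd
          have : μ v j = 1 := by omega
          exact (a2.2 hj'.1 hjv (by omega)).2 this
        omega
      · obtain ⟨x, hx, h⟩ := pick (T := S \ {v}) (μ v) (by omega)
        have hx' := mem_sdiff.1 hx
        exact ⟨x, fun _ => ⟨hx'.1, by simpa using hx'.2, h, fun h => absurd h h1⟩⟩
    · exact ⟨v, fun h => absurd h h2⟩
  obtain ⟨δ, hδ⟩ : ∃ δ : V → ℤ, δ = fun w => if t = 2 then dl x w else 0 := ⟨_, rfl⟩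
  have δsum : ∀ A : Finset V, ∑ i ∈ A, δ i = if t = 2 ∧ x ∈ A then 1 else 0 := by
    intro A
    by_cases h : t = 2
    · simp only [hδ, h, if_true, sum_dl, true_and]
    · simp [hδ, h]
  have δ0 : ∀ w, 0 ≤ δ w ∧ δ w ≤ 1 := by intro w; simp only [hδ, dl]; split_ifs <;> norm_num
  have δμ : ∀ w, δ w ≤ μ v w := by
    intro w
    have := H.nn v w
    simp only [hδ, dl]
    split_ifs with h1 h2
    · subst h2; exact (hx h1).2.2.1
    · exact this
    · exact this
  have claim : ∀ n : ℕ, ∀ A : Finset V, A.card = n → A ⊆ S \ {v} → A.Nonempty → A ≠ S \ {v} →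
      4 + a6 (b q r A - ∑ i ∈ A, (μ v i - δ i)) ≤ D S μ c A - ∑ i ∈ A, (μ v i - δ i) := by
    intro n
    induction n using Nat.strong_induction_on with
    | _ n IH =>
    intro A hn hA hAn hne
    have hAS : A ⊆ S := hA.trans sdiff_subset
    have hvA : v ∉ A := fun h => (mem_sdiff.1 (hA h)).2 (mem_singleton_self v)
    obtain ⟨w, hw⟩ := hAn
    by_cases h1 : A = {w}
    · subst h1
      rw [sum_singleton]
      have a1 := H.t w (hAS hw)
      have a2 := (hm w (hA hw)).2
      have a3 := δμ w
      have a4 := (δ0 w).1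
      unfold tp at a1
      obtain ⟨k, hk⟩ : ∃ k, k = μ v w - δ w := ⟨_, rfl⟩
      have : 0 ≤ k ∧ k ≤ 2 ∧ (k = 2 → D S μ c {w} = 6) := by omega
      obtain ⟨k1, k2, k3⟩ := this
      rw [← hk]
      clear hk
      unfold a6
      interval_cases k <;> omega
    · have hA2 := two_le hw h1
      have hins := D_insert (c := c) H.sym hAS hv hvA
      have hbin := b_insert (q := q) (r := r) hvA
      have hneS : A ≠ S := fun h => hvA (h ▸ hv)
      have hiS : insert v A ≠ S := insert_ne hA hne
      have hisub : insert v A ⊆ S := insert_subset hv hAS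
      have hi2 : 2 ≤ (insert v A).card := hA2.trans (card_le_card (subset_insert _ _))
      have p1 := H.P1 hAS hneS hA2
      have p2 := H.P1 hisub hiS hi2
      have p3 := H.P1' hAS hneS hA2
      have p4 := H.P1' hisub hiS hi2
      have par : (2:ℤ) ∣ D S μ c A - b q r A := H.parD A hAS
      rw [sum_sub_distrib]
      have e0 : 0 ≤ ∑ i ∈ A, μ v i := sum_nonneg fun i _ => H.nn v i
      have es : ∑ j ∈ S \ {v}, μ v j = ∑ j ∈ (S \ {v}) \ A, μ v j + ∑ j ∈ A, μ v j := (sum_sdiff hA).symm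
      have es0 : 0 ≤ ∑ j ∈ (S \ {v}) \ A, μ v j := sum_nonneg fun i _ => H.nn v i
      have ecases : (t = 1 ∧ ∑ i ∈ A, δ i = 0) ∨ (t = 2 ∧ ((∑ i ∈ A, δ i = 0 ∧ ∑ i ∈ A, μ v i ≤ 3 + t - c v) ∨
          (∑ i ∈ A, δ i = 1 ∧ 1 ≤ ∑ i ∈ A, μ v i))) := by
        rw [δsum]
        rcases ht with h | h
        · left; simp [h.1]
        · right
          refine ⟨h.1, ?_⟩
          obtain ⟨x1, x2, x3, x4⟩ := hx h.1
          by_cases hxA : x ∈ A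
          · right
            refine ⟨by simp [h.1, hxA], x3.trans (single_le_sum (f := μ v) (fun i _ => H.nn v i) hxA)⟩
          · left
            refine ⟨by simp [hxA], ?_⟩
            have : μ v x ≤ ∑ j ∈ (S \ {v}) \ A, μ v j :=
              single_le_sum (f := μ v) (fun i _ => H.nn v i) (by simp [x1, x2, hxA])
            omega
      have hbt : (6:ℤ) ∣ b q r (insert v A) - (b q r A + t) := by omega
      have hDt : D S μ c (insert v A) = D S μ c A + (4 + t) - 2 * ∑ i ∈ A, μ v i := by omega
      rw [a6_congr hbt, hDt] at p2
      rw [hDt] at p4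
      have hbm : b q r (insert v A) % 6 = (b q r A + t) % 6 := by omega
      rw [hbm] at p4
      rcases num hc c2 e0 (by omega) ecases par p1 p2 p3 p4 with h | ⟨h3, hex, hb0, hd8⟩
      · exact h
      · exfalso
        have hxA : t = 2 → x ∉ A := by
          intro h hxA; rw [δsum, if_pos ⟨h, hxA⟩] at hex; omega
        obtain ⟨f, F, hf⟩ := H.getf (x := x) hv hc hA ⟨w, hw⟩ ht
          (fun h => ⟨(hx h).1, (hx h).2.1, (hx h).2.2.1, (hx h).2.2.2, hxA h⟩) h3
        refine H.bad hv hA F hb0 hd8 h3 hf ?_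
        intro B hB hBn hBA
        have hBs : B ⊂ A := hB.ssubset_of_ne hBA
        have := IH B.card (hn ▸ card_lt_card hBs) B rfl (hB.trans hA) hBn (fun h => hBA (Subset.antisymm hB (h ▸ hA)))
        rw [sum_sub_distrib, δsum, if_neg (fun h => hxA h.1 (hB h.2)), sub_zero] at this
        exact this
  have hSd : S \ (S \ {v}) = {v} := by
    rw [sdiff_sdiff_right_self]; exact inter_eq_right.2 (singleton_subset_iff.2 hv)
  have sδ : ∑ i ∈ S \ {v}, δ i = t - 1 := by
    rw [δsum]
    rcases ht with h | h
    · simp [h.1]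
    · rw [if_pos ⟨h.1, by simp [(hx h.1).1, (hx h.1).2.1]⟩, h.1]; norm_num
  have hvs : {v} ⊆ S := singleton_subset_iff.2 hv
  refine H.ns (inner_k H.toBasic H.ih1 (sdiff_subset) (sdiff_ne hv)
    (fun i j => if i = v ∧ j ≠ v then - (μ v j - 2 * δ j) else if j = v ∧ i ≠ v then μ v i - 2 * δ i else 0)
    ?_ ?_ ?_ (fun i => μ v i - δ i) ?_ ?_ (fun A hA hn hne => claim A.card A rfl hA hn hne))
  · intro i j
    by_cases h1 : i = v <;> by_cases h2 : j = v <;> simp [h1, h2]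
  · intro i hi j hj hij hn
    simp only [mem_sdiff, mem_singleton, hi, hj, true_and] at hn
    by_cases h1 : i = v
    · subst h1
      have := δμ j
      have := δ0 j
      simp only [Ne.symm hij, ne_eq, not_false_eq_true, and_self, if_true, abs_neg, abs_le]
      omega
    · have h2 : j = v := by tauto
      subst h2
      have := δμ i
      have := δ0 i
      have := H.sym i j
      simp only [hij, ne_eq, not_false_eq_true, and_self, if_true, abs_le, not_true, and_false, if_false]
      omega
  · intro i hi
    rw [hSd, mem_singleton] at hi
    subst hi
    rw [← sum_sdiff hvs, sum_singleton]
    have : ∑ j ∈ S \ {i}, (if i = i ∧ j ≠ i then - (μ i j - 2 * δ j) else if j = i ∧ i ≠ i then μ i i - 2 * δ i else 0)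
        = - (∑ j ∈ S \ {i}, μ i j - 2 * ∑ j ∈ S \ {i}, δ j) := by
      rw [mul_sum, ← sum_sub_distrib, ← sum_neg_distrib]
      refine sum_congr rfl fun j hj => ?_
      have : j ≠ i := by simpa using (mem_sdiff.1 hj).2
      simp [this]
    rw [this, sδ]
    simp only [ne_eq, not_true, and_false, if_false]
    omega
  · intro i hi
    have hiS := (mem_sdiff.1 hi).1
    have hiv : i ≠ v := by simpa using (mem_sdiff.1 hi).2
    rw [hSd, sum_singleton, sum_singleton]
    have a1 := H.qe i hiS
    have a2 := H.c0 i hiS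
    have a3 := H.sym i v
    have a4 := δ0 i
    simp only [hiv, ne_eq, not_false_eq_true, and_self, if_true, abs_le, false_and, if_false]
    omega
  · have hb := b_compl H.toBasic hvs
    have hD := D_compl (c := c) H.sym hvs
    have hcs := H.csum
    rw [sum_sub_distrib, sδ, hD]
    rw [sum_singleton, cw_single]
    rw [cw_single] at hD
    have : (6:ℤ) ∣ (b q r (S \ {v}) - (∑ i ∈ S \ {v}, μ v i - (t - 1))) - (-(∑ i ∈ S, c i - c v + t - 1)) := by omega
    rw [a6_congr this]
    have hM : ∑ i ∈ S, c i - c v + t - 1 ≤ 5 := by omega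
    have hM0 : c v ≤ ∑ i ∈ S, c i := single_le_sum (f := c) (fun i hi => H.c0 i hi) hv
    unfold a6; omega

lemma Ctx.fls {S : Finset V} {μ : V → V → ℤ} {c q r : V → ℤ} (H : Ctx S μ c q r) : False := by
  rcases H.posneg with h | h
  · exact h.fls
  · exact h.fls

lemma Sol.small {S : Finset V} {μ : V → V → ℤ} {c q r : V → ℤ} (H : Good S μ c q r) (h : S.card ≤ 2) : Sol S μ r := by
  have hcase : S.card = 0 ∨ S.card = 1 ∨ S.card = 2 := by omega
  rcases hcase with h | h | h
  · rw [card_eq_zero] at h; subst h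
    exact ⟨fun _ _ => 0, by simp, by simp, by simp⟩
  · obtain ⟨a, rfl⟩ := card_eq_one.1 h
    have := H.tot
    rw [sum_singleton] at this
    refine ⟨fun _ _ => 0, by simp, ?_, ?_⟩
    · intro i hi j hj hij
      simp at hi hj; exact absurd (hi.trans hj.symm) hij
    · intro i hi
      simp at hi; subst hi; simpa using this
  · obtain ⟨u, v, huv, rfl⟩ := card_eq_two.1 h
    have h1 := H.cut {u} (by simp) (by simp) (by intro h; have := congrArg card h; simp [huv] at this)
    have h2 := H.cut {v} (by simp) (by simp) (by intro h; have := congrArg card h; simp [huv] at this)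
    have hp := H.par u (by simp)
    have htot := H.tot
    have hz := H.z
    have s1 : ({u, v} : Finset V) \ {u} = {v} := by
      ext i; simp only [mem_sdiff, mem_insert, mem_singleton]; constructor
      · tauto
      · rintro rfl; exact ⟨Or.inr rfl, Ne.symm huv⟩
    have s2 : ({u, v} : Finset V) \ {v} = {u} := by
      ext i; simp only [mem_sdiff, mem_insert, mem_singleton]; constructor
      · tauto
      · rintro rfl; exact ⟨Or.inl rfl, huv⟩
    have hs := H.sym u v
    rw [cw_single] at h1 h2 hp
    simp only [s1, s2, sum_singleton, sum_pair huv] at h1 h2 hp htot hz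
    have qp1 := H.qp u (by simp)
    have qp2 := H.qp v (by simp)
    have : ∃ t : ℤ, |t| ≤ μ u v ∧ (2:ℤ) ∣ t - μ u v ∧ (6:ℤ) ∣ t - r u := by
      have n := H.nn u v
      have key : 2 ≤ μ u v := by
        by_contra hc
        have : μ u v = 0 ∨ μ u v = 1 := by omega
        unfold a6 at *
        omega
      by_cases hr : r u % 6 ≤ 3
      · by_cases h3 : r u % 6 = 3
        · exact ⟨3, by rw [abs_le]; omega, by omega, by omega⟩
        · exact ⟨r u % 6, by rw [abs_le]; omega, by omega, by omega⟩
      · exact ⟨r u % 6 - 6, by rw [abs_le]; omega, by omega, by omega⟩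
    obtain ⟨t, t1, t2, t3⟩ := this
    refine ⟨fun i j => t * ar u v i j, ?_, ?_, ?_⟩
    · intro i j; beta_reduce; rw [ar_anti]; ring
    · intro i hi j hj hij
      simp only [mem_insert, mem_singleton] at hi hj
      rcases hi with rfl | rfl <;> rcases hj with rfl | rfl
      · exact absurd rfl hij
      · simp [ar, huv, t1, t2]
      · rw [← hs]; simp [ar, huv, t1]; omega
      · exact absurd rfl hij
    · intro i hi
      rw [← mul_sum, sum_ar _ (by simp) (by simp)]
      simp only [mem_insert, mem_singleton] at hi
      rcases hi with rfl | rfl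
      · simpa [dl, huv] using t3
      · simp [dl, Ne.symm huv]; omega

theorem LTWZ : ∀ (n : ℕ) (S : Finset V), S.card = n → ∀ (m : ℕ) (μ : V → V → ℤ) (c q r : V → ℤ),
    NN S μ c = m → Good S μ c q r → Sol S μ r := by
  intro n
  induction n using Nat.strong_induction_on with
  | _ n IH1 =>
  intro S hS m
  have nonneg : ∀ (S : Finset V) (μ : V → V → ℤ) (c q r : V → ℤ), Good S μ c q r → 0 ≤ NN S μ c := by
    intro S μ c q r H
    unfold NN
    refine add_nonneg (sum_nonneg fun i _ => sum_nonneg fun j _ => H.nn i j) (sum_nonneg fun i hi => ?_)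
    exact (abs_nonneg _).trans (H.qc i hi)
  induction m using Nat.strong_induction_on with
  | _ m IH2 =>
  intro μ c q r hm H
  by_contra hns
  by_cases h3 : S.card ≤ 2
  · exact hns (Sol.small H h3)
  · refine Ctx.fls (S := S) (μ := μ) (c := c) (q := q) (r := r) ⟨H, ?_, ?_, hns, by omega⟩
    · intro S' μ' c' q' r' hlt H'
      exact IH1 S'.card (hS ▸ hlt) S' rfl (NN S' μ' c').toNat μ' c' q' r'
        (Int.toNat_of_nonneg (nonneg _ _ _ _ _ H')).symm H'
    · intro μ' c' q' r' hlt H'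
      have := nonneg _ _ _ _ _ H'
      exact IH2 (NN S μ' c').toNat (by omega) μ' c' q' r' (Int.toNat_of_nonneg this).symm H'

theorem sol_of_good {S : Finset V} {μ : V → V → ℤ} {c q r : V → ℤ} (H : Good S μ c q r) : Sol S μ r := by
  have : 0 ≤ NN S μ c := by
    unfold NN
    refine add_nonneg (sum_nonneg fun i _ => sum_nonneg fun j _ => H.nn i j) (sum_nonneg fun i hi => ?_)
    exact (abs_nonneg _).trans (H.qc i hi)
  exact LTWZ S.card S rfl (NN S μ c).toNat μ c q r (Int.toNat_of_nonneg this).symm H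

end LT

open Finset
namespace LT

section
variable {V E : Type} [Fintype V] [DecidableEq V] [Fintype E] [DecidableEq E]

/-- Multiplicities. -/
def mu (G : Multigraph V E) (T : Finset E) (i j : V) : ℤ := ∑ e ∈ T, ed (G.fst e) (G.snd e) i j

/-- sign of an orientation -/
def sg (x : Bool) : ℤ := if x then 1 else -1

lemma cw_mu (G : Multigraph V E) (A : Finset V) : cw univ (mu G univ) A = ((G.cut A).card : ℤ) := by
  have : cw univ (mu G univ) A = ∑ e : E, cw univ (ed (G.fst e) (G.snd e)) A := by
    unfold cw mu
    rw [sum_comm]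
    rw [sum_comm]
    simp only [sum_comm (s := univ \ A) (t := (univ : Finset E))]
    rw [sum_comm]
  rw [this]
  unfold Multigraph.cut
  rw [card_filter]
  push_cast
  refine sum_congr rfl fun e _ => ?_
  rw [cw_ed _ _ _ _ (mem_univ _) (mem_univ _)]
  by_cases h1 : G.fst e ∈ A <;> by_cases h2 : G.snd e ∈ A <;> simp [h1, h2]

lemma sum_ar' {x y : V} (i : V) : ∑ j, ar x y i j = dl x i - dl y i :=
  sum_ar univ (mem_univ _) (mem_univ _) i

lemma mu_nn (G : Multigraph V E) (T : Finset E) (i j : V) : 0 ≤ mu G T i j := by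
  refine sum_nonneg fun e _ => ?_
  unfold ed; split_ifs <;> norm_num

lemma real (G : Multigraph V E) (T : Finset E) : ∀ f : V → V → ℤ, (∀ i j, f j i = - f i j) →
    (∀ i j, i ≠ j → |f i j| ≤ mu G T i j ∧ (2:ℤ) ∣ f i j - mu G T i j) →
    ∃ D : E → Bool, ∀ i j, f i j = ∑ e ∈ T, sg (D e) * ar (G.fst e) (G.snd e) i j := by
  induction T using Finset.induction_on with
  | empty =>
    intro f fa fb
    refine ⟨fun _ => true, fun i j => ?_⟩
    by_cases h : i = j
    · subst h; have := fa i i; simp; omega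
    · have := (fb i j h).1
      simpa [mu] using this
  | insert e T he ih =>
    intro f fa fb
    have hl := G.no_loop e
    obtain ⟨s, hs⟩ : ∃ s : Bool, (s = true ∧ 0 < f (G.fst e) (G.snd e)) ∨ (s = false ∧ f (G.fst e) (G.snd e) ≤ 0) := by
      by_cases h : 0 < f (G.fst e) (G.snd e)
      · exact ⟨true, Or.inl ⟨rfl, h⟩⟩
      · exact ⟨false, Or.inr ⟨rfl, by omega⟩⟩
    obtain ⟨D, hD⟩ := ih (fun i j => f i j - sg s * ar (G.fst e) (G.snd e) i j) (by
      intro i j; beta_reduce; rw [fa i j, ar_anti]; ring) (by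
      intro i j hij
      have h1 := fb i j hij
      have h2 := fa (G.fst e) (G.snd e)
      have hm : mu G (insert e T) i j = ed (G.fst e) (G.snd e) i j + mu G T i j := by
        unfold mu; rw [sum_insert he]
      rw [hm] at h1
      have hnn := mu_nn G T i j
      unfold sg
      by_cases e1 : i = G.fst e ∧ j = G.snd e
      · obtain ⟨rfl, rfl⟩ := e1
        simp only [ed, ar, abs_le] at *
        simp only [hl, Ne.symm hl, and_self, if_true, if_false] at *
        rcases hs with ⟨rfl, hs⟩ | ⟨rfl, hs⟩ <;> simp only [if_true, Bool.false_eq_true, if_false] <;> omega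
      · by_cases e2 : i = G.snd e ∧ j = G.fst e
        · obtain ⟨rfl, rfl⟩ := e2
          simp only [ed, ar, abs_le] at *
          simp only [hl, Ne.symm hl, and_self, if_true, if_false] at *
          rcases hs with ⟨rfl, hs⟩ | ⟨rfl, hs⟩ <;> simp only [if_true, Bool.false_eq_true, if_false] <;> omega
        · simp only [ed, ar, e1, e2, if_false] at *
          simpa using h1)
    refine ⟨Function.update D e s, fun i j => ?_⟩
    rw [sum_insert he, Function.update_self]
    have : ∑ x ∈ T, sg (Function.update D e s x) * ar (G.fst x) (G.snd x) i j = ∑ x ∈ T, sg (D x) * ar (G.fst x) (G.snd x) i j := by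
      refine sum_congr rfl fun x hx => ?_
      rw [Function.update_of_ne]
      rintro rfl; exact he hx
    rw [this, ← hD i j]; ring

lemma orient (G : Multigraph V E) {r : V → ℤ} (h : Sol univ (mu G univ) r) :
    ∃ D : E → Bool, ∀ v, (6:ℤ) ∣ G.outDeg D v - G.inDeg D v - r v := by
  obtain ⟨f, fa, fb, fn⟩ := h
  obtain ⟨D, hD⟩ := real G univ f fa (fun i j h => fb i (mem_univ _) j (mem_univ _) h)
  refine ⟨D, fun v => ?_⟩
  have h1 := fn v (mem_univ v)
  have : G.outDeg D v - G.inDeg D v = ∑ j, f v j := by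
    simp only [hD]
    rw [sum_comm]
    simp only [← mul_sum, sum_ar']
    unfold Multigraph.outDeg Multigraph.inDeg
    rw [card_filter, card_filter]
    push_cast
    rw [← sum_sub_distrib]
    refine sum_congr rfl fun e _ => ?_
    unfold Multigraph.tail Multigraph.head sg dl
    cases D e <;> simp [eq_comm]
  rw [this]; exact h1

lemma good_Z3 (G : Multigraph V E)
    (h : ∀ r : V → ℤ, (∀ i, (2:ℤ) ∣ r i - cw univ (mu G univ) {i}) → (6:ℤ) ∣ ∑ i, r i →
      ∃ c q, Good univ (mu G univ) c q r) : G.Z3Connected := by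
  intro β hβ
  have hs : (2:ℤ) ∣ ∑ i, cw univ (mu G univ) {i} := by
    have : ∑ i, cw univ (mu G univ) {i} = ∑ e : E, (2:ℤ) := by
      have e1 : ∀ i, cw univ (mu G univ) {i} = ∑ e : E, (dl (G.fst e) i + dl (G.snd e) i) := by
        intro i
        rw [cw_mu]
        unfold Multigraph.cut
        rw [card_filter]
        push_cast
        refine sum_congr rfl fun e _ => ?_
        have hl := G.no_loop e
        unfold dl
        by_cases h1 : i = G.fst e
        · subst h1; simp [Ne.symm hl, hl]
        · by_cases h2 : i = G.snd e
          · subst h2; simp [hl, Ne.symm hl]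
          · simp [h1, h2, Ne.symm h1, Ne.symm h2]
      simp only [e1]
      rw [sum_comm]
      refine sum_congr rfl fun e _ => ?_
      rw [sum_add_distrib, sum_dl, sum_dl]; simp
    rw [this]
    exact dvd_sum fun _ _ => dvd_refl _
  obtain ⟨r, hr⟩ : ∃ r : V → ℤ, r = fun i => 3 * cw univ (mu G univ) {i} + 4 * ((β i).val : ℤ) := ⟨_, rfl⟩
  have hr3 : ∀ i, ((r i : ℤ) : ZMod 3) = β i := by
    intro i
    rw [hr]
    push_cast
    rw [ZMod.natCast_zmod_val]
    have : (3 : ZMod 3) = 0 := by decide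
    rw [this, zero_mul, zero_add, show (4 : ZMod 3) = 1 by decide, one_mul]
  have ht3 : (3:ℤ) ∣ ∑ i, r i := by
    have : ((∑ i, r i : ℤ) : ZMod 3) = 0 := by
      push_cast
      simp only [hr3]
      exact hβ
    exact (ZMod.intCast_zmod_eq_zero_iff_dvd _ 3).1 this
  have ht2 : (2:ℤ) ∣ ∑ i, r i := by
    rw [hr, sum_add_distrib, ← mul_sum, ← mul_sum]
    omega
  obtain ⟨c, q, hg⟩ := h r (by intro i; rw [hr]; beta_reduce; omega) (by omega)
  obtain ⟨D, hD⟩ := orient G (sol_of_good hg)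
  refine ⟨D, fun v => ?_⟩
  rw [← hr3 v]
  have h3 : (3:ℤ) ∣ G.outDeg D v - G.inDeg D v - r v := (by norm_num : (3:ℤ) ∣ 6).trans (hD v)
  have := (ZMod.intCast_zmod_eq_zero_iff_dvd _ 3).2 h3
  push_cast at this ⊢
  exact sub_eq_zero.1 this

end
end LT

open Finset
namespace LT

section
variable {V E : Type} [Fintype V] [DecidableEq V] [Fintype E] [DecidableEq E]

/-- The sets whose boundary has exactly four edges. -/
def F4 (G : Multigraph V E) : Finset (Finset V) :=
  univ.filter fun A => A.Nonempty ∧ A ≠ univ ∧ (G.cut A).card = 4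

/-- Minimal members. -/
def Lv (G : Multigraph V E) : Finset (Finset V) :=
  (F4 G).filter fun A => ∀ B ∈ F4 G, B ⊆ A → B = A

/-- Leaves inside a set. -/
def TL (G : Multigraph V E) (A : Finset V) : Finset (Finset V) := (Lv G).filter fun L => L ⊆ A

lemma mem_F4 {G : Multigraph V E} {A : Finset V} :
    A ∈ F4 G ↔ A.Nonempty ∧ A ≠ univ ∧ (G.cut A).card = 4 := by simp [F4]

lemma cut_compl (G : Multigraph V E) (A : Finset V) : G.cut Aᶜ = G.cut A := by
  unfold Multigraph.cut
  ext e; simp only [mem_filter, mem_compl]; tauto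

lemma F4_compl {G : Multigraph V E} {A : Finset V} (h : A ∈ F4 G) : Aᶜ ∈ F4 G := by
  rw [mem_F4] at *
  refine ⟨?_, ?_, ?_⟩
  · rw [nonempty_iff_ne_empty]; intro h1; exact h.2.1 (compl_eq_empty_iff A |>.1 h1)
  · intro h1; exact h.1.ne_empty (compl_eq_univ_iff A |>.1 h1)
  · rw [cut_compl]; exact h.2.2

lemma submod (G : Multigraph V E) (A B : Finset V) :
    (G.cut (A ∩ B)).card + (G.cut (A ∪ B)).card ≤ (G.cut A).card + (G.cut B).card := by
  unfold Multigraph.cut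
  simp only [card_filter]
  rw [← sum_add_distrib, ← sum_add_distrib]
  refine sum_le_sum fun e _ => ?_
  by_cases h1 : G.fst e ∈ A <;> by_cases h2 : G.snd e ∈ A <;> by_cases h3 : G.fst e ∈ B <;>
    by_cases h4 : G.snd e ∈ B <;> simp [h1, h2, h3, h4]

lemma exists_leaf {G : Multigraph V E} : ∀ (n : ℕ) (A : Finset V), A.card = n → A ∈ F4 G → (TL G A).Nonempty := by
  intro n
  induction n using Nat.strong_induction_on with
  | _ n IH =>
  intro A hn hA
  by_cases h : ∀ B ∈ F4 G, B ⊆ A → B = A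
  · exact ⟨A, by simp only [TL, Lv, mem_filter]; exact ⟨⟨hA, h⟩, Subset.refl _⟩⟩
  · push Not at h
    obtain ⟨B, hB, hBA, hne⟩ := h
    obtain ⟨L, hL⟩ := IH B.card (hn ▸ card_lt_card (hBA.ssubset_of_ne hne)) B rfl hB
    simp only [TL, mem_filter] at hL
    exact ⟨L, by simp only [TL, mem_filter]; exact ⟨hL.1, hL.2.trans hBA⟩⟩

lemma leaf_cross {G : Multigraph V E} (h4 : G.EdgeConnected 4) {A L : Finset V} (hA : A ∈ F4 G) (hL : L ∈ Lv G)
    (hi : (L ∩ A).Nonempty) : L ⊆ A := by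
  simp only [Lv, mem_filter] at hL
  obtain ⟨hL, hmin⟩ := hL
  by_cases hu : L ∪ A = univ
  · have hsub : Aᶜ ⊆ L := by
      intro i hi
      have : i ∈ L ∪ A := hu ▸ mem_univ i
      rw [mem_compl] at hi
      rcases mem_union.1 this with h | h
      · exact h
      · exact absurd h hi
    have := hmin _ (F4_compl hA) hsub
    obtain ⟨i, hi⟩ := hi
    rw [mem_inter, ← this, mem_compl] at hi
    exact absurd hi.2 hi.1
  · have h1 := submod G L A
    have hA' := mem_F4.1 hA
    have hL' := mem_F4.1 hL
    have hne : L ∩ A ≠ univ := by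
      intro h; exact hA'.2.1 (univ_subset_iff.1 (h ▸ inter_subset_right))
    have h2 := h4 _ hi hne
    have h3 := h4 _ (hA'.1.mono subset_union_right) hu
    have : L ∩ A = L := hmin _ (mem_F4.2 ⟨hi, hne, by omega⟩) inter_subset_left
    exact inter_eq_left.1 this

lemma Lv_F4 {G : Multigraph V E} {L : Finset V} (h : L ∈ Lv G) : L ∈ F4 G := (mem_filter.1 h).1

lemma TL_leaf {G : Multigraph V E} {L : Finset V} (h : L ∈ Lv G) : TL G L = {L} := by
  ext M
  simp only [TL, mem_filter, mem_singleton]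
  constructor
  · rintro ⟨h1, h2⟩; exact (mem_filter.1 h).2 M (Lv_F4 h1) h2
  · rintro rfl; exact ⟨h, Subset.refl _⟩

lemma leaf_disj {G : Multigraph V E} (h4 : G.EdgeConnected 4) {L M : Finset V} (hL : L ∈ Lv G) (hM : M ∈ Lv G)
    (hne : L ≠ M) : Disjoint L M := by
  rw [disjoint_iff_inter_eq_empty]
  by_contra h
  have := leaf_cross h4 (Lv_F4 hM) hL (nonempty_iff_ne_empty.2 h)
  exact hne ((mem_filter.1 hM).2 L (Lv_F4 hL) this)

lemma TL_compl {G : Multigraph V E} (h4 : G.EdgeConnected 4) {L : Finset V} (h : L ∈ Lv G) : TL G Lᶜ = (Lv G).erase L := by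
  ext M
  simp only [TL, mem_filter, mem_erase]
  constructor
  · rintro ⟨h1, h2⟩
    refine ⟨?_, h1⟩
    rintro rfl
    obtain ⟨i, hi⟩ := (mem_F4.1 (Lv_F4 h)).1
    exact mem_compl.1 (h2 hi) hi
  · rintro ⟨h1, h2⟩
    refine ⟨h2, ?_⟩
    rw [subset_compl_iff_disjoint_right]
    exact leaf_disj h4 h2 h h1

lemma F4_card {G : Multigraph V E} (h4 : G.EdgeConnected 4) (hc4 : (G.kCuts 4).card ≤ 5) : (F4 G).card ≤ 10 := by
  have : (F4 G).card ≤ 2 * ((F4 G).image G.cut).card := by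
    refine card_le_mul_card_image _ _ ?_
    intro a ha
    obtain ⟨A, hA, rfl⟩ := mem_image.1 ha
    refine (card_le_card (t := {A, Aᶜ}) ?_).trans card_le_two
    intro B hB
    obtain ⟨hB, hcut⟩ := mem_filter.1 hB
    obtain ⟨C, hC⟩ : ∃ C : Finset V, C = univ.filter fun i => (i ∈ A ↔ i ∈ B) := ⟨_, rfl⟩
    have hCm : ∀ i, i ∈ C ↔ (i ∈ A ↔ i ∈ B) := by intro i; simp [hC]
    have h0 : G.cut C = ∅ := by
      ext e
      have he : e ∈ G.cut B ↔ e ∈ G.cut A := by rw [hcut]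
      simp only [Multigraph.cut, mem_filter, mem_univ, true_and] at he
      simp only [Multigraph.cut, mem_filter, mem_univ, true_and, hCm, notMem_empty, iff_false]
      tauto
    simp only [mem_insert, mem_singleton]
    by_cases hn : C.Nonempty
    · by_cases hu : C = univ
      · left
        ext i
        exact ((hCm i).1 (hu ▸ mem_univ i)).symm
      · have := h4 C hn hu
        rw [h0] at this; simp at this
    · right
      ext i
      have : i ∉ C := fun h => hn ⟨i, h⟩
      rw [hCm] at this
      rw [mem_compl]; tauto
  have e : (F4 G).image G.cut = G.kCuts 4 := rfl
  rw [e] at this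
  omega

lemma core [Nonempty V] {G : Multigraph V E} (h4 : G.EdgeConnected 4) (hc5 : G.kCuts 5 = ∅) {r : V → ℤ}
    (hr : ∀ i, (2:ℤ) ∣ r i - cw univ (mu G univ) {i}) (ht : (6:ℤ) ∣ ∑ i, r i) (w σ : Finset V → ℤ)
    (hw : ∀ L ∈ Lv G, |σ L| ≤ w L) (hp : ∀ L ∈ Lv G, (2:ℤ) ∣ σ L - w L)
    (hz : ∑ L ∈ Lv G, w L ≤ 4 + a6 (∑ L ∈ Lv G, σ L))
    (hc : ∀ A ∈ F4 G, 2 ≤ ∑ L ∈ TL G A, w L ∨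
      (∑ L ∈ TL G A, w L = 1 ∧ (∑ i ∈ A, r i + ∑ L ∈ TL G A, σ L) % 6 ≠ 3)) :
    ∃ c q, Good univ (mu G univ) c q r := by
  have hx : ∀ L : Finset V, ∃ x : V, L ∈ Lv G → x ∈ L := by
    intro L
    by_cases h : L ∈ Lv G
    · obtain ⟨x, hx⟩ := (mem_F4.1 (Lv_F4 h)).1
      exact ⟨x, fun _ => hx⟩
    · exact ⟨Classical.arbitrary V, fun h' => absurd h' h⟩
  choose x hx using hx
  have sumc : ∀ (g : Finset V → ℤ) (A : Finset V), ∑ i ∈ A, ∑ L ∈ Lv G, g L * dl (x L) i = ∑ L ∈ Lv G, if x L ∈ A then g L else 0 := by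
    intro g A
    rw [sum_comm]
    refine sum_congr rfl fun L _ => ?_
    rw [← mul_sum, sum_dl]; split_ifs <;> ring
  have w0 : ∀ L ∈ Lv G, 0 ≤ w L := fun L hL => (abs_nonneg _).trans (hw L hL)
  have dl0 : ∀ x i : V, 0 ≤ dl x i := by intro x i; unfold dl; split_ifs <;> norm_num
  have B : Basic univ (mu G univ) (fun i => ∑ L ∈ Lv G, w L * dl (x L) i) (fun i => ∑ L ∈ Lv G, σ L * dl (x L) i) r := by
    refine ⟨?_, mu_nn G univ, ?_, ?_, fun i _ => hr i, ht, ?_⟩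
    · intro i j; unfold mu; exact sum_congr rfl fun e _ => ed_sym _ _ _ _
    · intro i _
      refine (abs_sum_le_sum_abs _ _).trans (sum_le_sum fun L hL => ?_)
      rw [abs_mul, abs_of_nonneg (dl0 _ _)]
      exact mul_le_mul_of_nonneg_right (hw L hL) (dl0 _ _)
    · intro i _
      rw [← sum_sub_distrib]
      refine dvd_sum fun L hL => ?_
      rw [← sub_mul]
      exact (hp L hL).mul_right _
    · rw [sumc, sumc]; simpa using hz
  refine ⟨_, _, B, ?_⟩
  intro A _ hAn hAu
  have par := B.parD A (subset_univ A)
  rw [cw_mu] at *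
  have c0 : 0 ≤ ∑ i ∈ A, ∑ L ∈ Lv G, w L * dl (x L) i :=
    sum_nonneg fun i _ => sum_nonneg fun L hL => mul_nonneg (w0 L hL) (dl0 _ _)
  have d4 := h4 A hAn hAu
  have d5 : (G.cut A).card ≠ 5 := by
    intro h
    have : G.cut A ∈ G.kCuts 5 := by
      unfold Multigraph.kCuts
      exact mem_image_of_mem _ (by simp [hAn, hAu, h])
    rw [hc5] at this; simp at this
  by_cases d : (G.cut A).card = 4
  · have hA : A ∈ F4 G := mem_F4.2 ⟨hAn, hAu, d⟩
    have key : ∀ g : Finset V → ℤ, (∑ L ∈ Lv G, if x L ∈ A then g L else 0) = ∑ L ∈ TL G A, g L := by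
      intro g
      unfold TL
      rw [sum_filter]
      refine sum_congr rfl fun L hL => ?_
      have : x L ∈ A ↔ L ⊆ A := by
        constructor
        · intro h; exact leaf_cross h4 hA hL ⟨x L, mem_inter.2 ⟨hx L hL, h⟩⟩
        · intro h; exact h (hx L hL)
      simp only [this]
    rw [sum_add_distrib] at *
    rw [sumc, key] at *
    rw [sumc, key] at *
    have := hc A hA
    unfold a6
    omega
  · unfold a6; omega
end
end LT

open Finset
namespace LT

section
variable {V E : Type} [Fintype V] [DecidableEq V] [Fintype E] [DecidableEq E]

lemma r_even {G : Multigraph V E} {r : V → ℤ} (hr : ∀ i, (2:ℤ) ∣ r i - cw univ (mu G univ) {i}) (ht : (6:ℤ) ∣ ∑ i, r i)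
    {A : Finset V} (hA : A ∈ F4 G) : (2:ℤ) ∣ ∑ i ∈ A, r i := by
  have B : Basic univ (mu G univ) (fun _ => 0) (fun _ => 0) r := by
    refine ⟨?_, mu_nn G univ, by simp, by simp, fun i _ => hr i, ht, by simp; decide⟩
    intro i j; unfold mu; exact sum_congr rfl fun e _ => ed_sym _ _ _ _
  have := B.parD A (subset_univ A)
  rw [cw_mu, (mem_F4.1 hA).2.2] at this
  simp at this
  omega

lemma main_good [Nonempty V] {G : Multigraph V E} (h4 : G.EdgeConnected 4) (hc4 : (G.kCuts 4).card ≤ 5)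
    (hc5 : G.kCuts 5 = ∅) {r : V → ℤ}
    (hr : ∀ i, (2:ℤ) ∣ r i - cw univ (mu G univ) {i}) (ht : (6:ℤ) ∣ ∑ i, r i) :
    ∃ c q, Good univ (mu G univ) c q r := by
  have hF := F4_card h4 hc4
  have hne : ∀ A ∈ F4 G, (TL G A).Nonempty := fun A hA => exists_leaf A.card A rfl hA
  have hTL : ∀ A, TL G A ⊆ Lv G := fun A => filter_subset _ _
  -- leaves together with complements
  have dis : 3 ≤ (Lv G).card → Disjoint (Lv G) ((Lv G).image compl) := by
    intro h3
    rw [disjoint_left]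
    intro L hL hL'
    obtain ⟨M, hM, rfl⟩ := mem_image.1 hL'
    have h1 := TL_leaf hL
    rw [TL_compl h4 hM] at h1
    have := congrArg card h1
    rw [card_erase_of_mem hM, card_singleton] at this
    omega
  have cardc : ((Lv G).image compl).card = (Lv G).card := card_image_of_injective _ compl_injective
  have subF : Lv G ∪ (Lv G).image compl ⊆ F4 G := by
    refine union_subset (filter_subset _ _) ?_
    intro A hA
    obtain ⟨M, hM, rfl⟩ := mem_image.1 hA
    exact F4_compl (Lv_F4 hM)
  have cardu : 3 ≤ (Lv G).card → (Lv G ∪ (Lv G).image compl).card = 2 * (Lv G).card := by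
    intro h; rw [card_union_of_disjoint (dis h), cardc]; ring
  have hle5 : (Lv G).card ≤ 5 := by
    by_contra h
    have h1 := cardu (by omega)
    have h2 := card_le_card subF
    omega
  have pickσ : ∀ L, ∃ s : ℤ, (s = 1 ∨ s = -1) ∧ (L ∈ Lv G → (∑ i ∈ L, r i + s) % 6 ≠ 3) := by
    intro L
    by_cases h : (∑ i ∈ L, r i + 1) % 6 = 3
    · exact ⟨-1, Or.inr rfl, fun _ => by omega⟩
    · exact ⟨1, Or.inl rfl, fun _ => h⟩
  have hcases : (Lv G).card ≤ 2 ∨ (Lv G).card = 3 ∨ (Lv G).card = 4 ∨ (Lv G).card = 5 := by omega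
  have two : ∀ A ∈ F4 G, 2 ≤ ∑ L ∈ TL G A, (2:ℤ) := by
    intro A hA
    have := card_pos.2 (hne A hA)
    rw [sum_const, nsmul_eq_mul]
    have : (1:ℤ) ≤ ((TL G A).card : ℤ) := by exact_mod_cast this
    omega
  rcases hcases with h | h | h | h
  · refine core h4 hc5 hr ht (fun _ => 2) (fun _ => 0) (by simp) (by simp) ?_ (fun A hA => Or.inl (two A hA))
    rw [sum_const, sum_const_zero, nsmul_eq_mul]
    have : ((Lv G).card : ℤ) ≤ 2 := by exact_mod_cast h
    unfold a6; omega
  · obtain ⟨L1, hL1⟩ : (Lv G).Nonempty := card_pos.1 (by omega)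
    refine core h4 hc5 hr ht (fun _ => 2) (fun L => if L = L1 then 2 else 0) ?_ ?_ ?_ (fun A hA => Or.inl (two A hA))
    · intro L _; beta_reduce; split_ifs <;> norm_num
    · intro L _; beta_reduce; split_ifs <;> norm_num
    · rw [sum_const, nsmul_eq_mul, h, sum_ite_eq', if_pos hL1]
      decide
  · -- four leaves
    have : ∃ L0 ∈ Lv G, ∀ A ∈ F4 G, TL G A = {L0} → A = L0 := by
      by_contra hcon
      push Not at hcon
      choose! g hg1 hg2 hg3 using hcon
      have ginj : Set.InjOn g (Lv G : Set (Finset V)) := by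
        intro L hL M hM hLM
        have h1 := hg2 L hL
        rw [hLM, hg2 M hM] at h1
        exact (singleton_injective h1).symm
      have cg : ((Lv G).image g).card = 4 := by rw [card_image_of_injOn ginj, h]
      have d2 : Disjoint (Lv G ∪ (Lv G).image compl) ((Lv G).image g) := by
        rw [disjoint_left]
        intro A hA hA'
        obtain ⟨L, hL, rfl⟩ := mem_image.1 hA'
        rcases mem_union.1 hA with hA | hA
        · have h1 := TL_leaf hA
          rw [hg2 L hL] at h1
          exact hg3 L hL (singleton_injective h1).symm
        · obtain ⟨M, hM, hMe⟩ := mem_image.1 hA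
          have h1 := TL_compl h4 hM
          rw [hMe, hg2 L hL] at h1
          have := congrArg card h1
          rw [card_erase_of_mem hM, card_singleton] at this
          omega
      have s2 : (Lv G ∪ (Lv G).image compl) ∪ (Lv G).image g ⊆ F4 G := by
        refine union_subset subF ?_
        intro A hA
        obtain ⟨M, hM, rfl⟩ := mem_image.1 hA
        exact hg1 M hM
      have c1 := card_le_card s2
      rw [card_union_of_disjoint d2, cardu (by omega)] at c1
      omega
    obtain ⟨L0, hL0, hL0'⟩ := this
    obtain ⟨s, hs, hs2⟩ := pickσ L0
    have hs2 := hs2 hL0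
    obtain ⟨L1, hL1⟩ : ((Lv G).erase L0).Nonempty := card_pos.1 (by rw [card_erase_of_mem hL0]; omega)
    have hL1' := mem_erase.1 hL1
    refine core h4 hc5 hr ht (fun L => if L = L0 then 1 else 2)
      (fun L => if L = L0 then s else if L = L1 then 2 * s else 0) ?_ ?_ ?_ ?_
    · intro L _; beta_reduce; rcases hs with rfl | rfl <;> split_ifs <;> norm_num
    · intro L _; beta_reduce; rcases hs with rfl | rfl <;> split_ifs <;> norm_num
    · have e1 : ∑ L ∈ Lv G, (if L = L0 then (1:ℤ) else 2) = 7 := by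
        rw [← add_sum_erase _ _ hL0, if_pos rfl]
        have : ∑ L ∈ (Lv G).erase L0, (if L = L0 then (1:ℤ) else 2) = ∑ L ∈ (Lv G).erase L0, 2 :=
          sum_congr rfl fun L hL => if_neg (mem_erase.1 hL).1
        rw [this, sum_const, card_erase_of_mem hL0, h]; norm_num
      have e2 : ∑ L ∈ Lv G, (if L = L0 then s else if L = L1 then 2 * s else 0) = 3 * s := by
        rw [← add_sum_erase _ _ hL0, if_pos rfl]
        have : ∑ L ∈ (Lv G).erase L0, (if L = L0 then s else if L = L1 then 2 * s else 0)
            = ∑ L ∈ (Lv G).erase L0, (if L = L1 then 2 * s else 0) :=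
          sum_congr rfl fun L hL => if_neg (mem_erase.1 hL).1
        rw [this, sum_ite_eq', if_pos hL1]; ring
      rw [e1, e2]
      rcases hs with rfl | rfl <;> decide
    · intro A hA
      by_cases hT : TL G A = {L0}
      · right
        have := hL0' A hA hT
        subst this
        rw [hT, sum_singleton, sum_singleton, if_pos rfl, if_pos rfl]
        exact ⟨rfl, hs2⟩
      · left
        have : ∃ M ∈ TL G A, M ≠ L0 := by
          by_contra hcon
          push Not at hcon
          obtain ⟨M, hM⟩ := hne A hA
          refine hT (eq_singleton_iff_unique_mem.2 ⟨(hcon M hM) ▸ hM, hcon⟩)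
        obtain ⟨M, hM, hMne⟩ := this
        have := single_le_sum (f := fun L => if L = L0 then (1:ℤ) else 2) (s := TL G A)
          (fun L _ => by beta_reduce; split_ifs <;> norm_num) hM
        simpa [hMne] using this
  · -- five leaves
    obtain ⟨L0, hL0⟩ : (Lv G).Nonempty := card_pos.1 (by omega)
    choose s hs hs2 using pickσ
    have hs3 : (2:ℤ) ∣ ∑ L ∈ (Lv G).erase L0, s L := by
      have h1 : (2:ℤ) ∣ ∑ L ∈ (Lv G).erase L0, (s L - 1) := by
        refine dvd_sum fun L _ => ?_
        rcases hs L with h | h <;> rw [h] <;> norm_num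
      rw [sum_sub_distrib, sum_const, card_erase_of_mem hL0, h] at h1
      norm_num at h1
      omega
    obtain ⟨s0, hs0, hs0'⟩ : ∃ s0 : ℤ, (s0 = 1 ∨ s0 = -1 ∨ s0 = 3) ∧ (6:ℤ) ∣ s0 + ∑ L ∈ (Lv G).erase L0, s L - 3 := by
      clear h
      generalize ∑ L ∈ (Lv G).erase L0, s L = X at hs3 ⊢
      have : X % 6 = 0 ∨ X % 6 = 2 ∨ X % 6 = 4 := by omega
      rcases this with h | h | h
      · exact ⟨3, by simp, by omega⟩
      · exact ⟨1, by simp, by omega⟩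
      · exact ⟨-1, by simp, by omega⟩
    have hall : F4 G = Lv G ∪ (Lv G).image compl :=
      (eq_of_subset_of_card_le subF (by rw [cardu (by omega)]; omega)).symm
    refine core h4 hc5 hr ht (fun L => if L = L0 then 3 else 1) (fun L => if L = L0 then s0 else s L) ?_ ?_ ?_ ?_
    · intro L _; beta_reduce
      split_ifs
      · rcases hs0 with h | h | h <;> rw [h] <;> norm_num
      · rcases hs L with h | h <;> rw [h] <;> norm_num
    · intro L _; beta_reduce
      split_ifs
      · rcases hs0 with h | h | h <;> rw [h] <;> norm_num
      · rcases hs L with h | h <;> rw [h] <;> norm_num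
    · have e1 : ∑ L ∈ Lv G, (if L = L0 then (3:ℤ) else 1) = 7 := by
        rw [← add_sum_erase _ _ hL0, if_pos rfl]
        have : ∑ L ∈ (Lv G).erase L0, (if L = L0 then (3:ℤ) else 1) = ∑ L ∈ (Lv G).erase L0, 1 :=
          sum_congr rfl fun L hL => if_neg (mem_erase.1 hL).1
        rw [this, sum_const, card_erase_of_mem hL0, h]; norm_num
      have e2 : ∑ L ∈ Lv G, (if L = L0 then s0 else s L) = s0 + ∑ L ∈ (Lv G).erase L0, s L := by
        rw [← add_sum_erase _ _ hL0, if_pos rfl]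
        congr 1
        exact sum_congr rfl fun L hL => if_neg (mem_erase.1 hL).1
      rw [e1, e2, a6_congr hs0']
      decide
    · intro A hA
      rw [hall] at hA
      rcases mem_union.1 hA with hA | hA
      · rw [TL_leaf hA, sum_singleton, sum_singleton]
        by_cases e : A = L0
        · left; rw [if_pos e]; norm_num
        · right; rw [if_neg e, if_neg e]; exact ⟨rfl, hs2 A hA⟩
      · left
        obtain ⟨M, hM, rfl⟩ := mem_image.1 hA
        rw [TL_compl h4 hM]
        have : ∑ L ∈ (Lv G).erase M, (1:ℤ) ≤ ∑ L ∈ (Lv G).erase M, (if L = L0 then (3:ℤ) else 1) :=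
          sum_le_sum fun L _ => by split_ifs <;> norm_num
        rw [sum_const, card_erase_of_mem hM, h] at this
        norm_num at this
        omega
end
end LT

namespace Multigraph
theorem stmt_17 {V E : Type} [Fintype V] [DecidableEq V] [Fintype E] [DecidableEq E] (G : Multigraph V E)
    (h4 : G.EdgeConnected 4) (hc4 : (G.kCuts 4).card ≤ 5)
    (hc5 : G.kCuts 5 = ∅) :
    G.Z3Connected := by
  rcases isEmpty_or_nonempty V with hV | hV
  · intro β _
    exact ⟨fun _ => true, fun v => (hV.false v).elim⟩
  · exact LT.good_Z3 G (fun r hr ht => LT.main_good h4 hc4 hc5 hr ht)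
end Multigraph
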